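/- arXiv:1009.5187 — 2 statements merged into one kernel-verified Lean document; each statement's English description precedes it below -/
import Mathlib

section
/- Fix φ and φ_i as in the context. There exists a constant C such that for all sequences (f_i)_{i∈ℤ} and (g_j)_{j∈ℤ} of square-integrable functions on ℝ with Σ_i ‖f_i‖_{L^2}^2 < ∞ and Σ_j ‖g_j‖_{L^2}^2 < ∞, every jump collection (N_k)_{k≥0}, and every λ > 0: ∫_ℝ #{ k ≥ 1 : |Σ_{N_{k−1}(x) < i < j ≤ N_k(x)} (φ_i * f_i)(x) (φ_j * g_j)(x)| > λ } dx ≤ C λ^{−1} (Σ_{i∈ℤ} ‖f_i‖_{L^2}^2)^{1/2} (Σ_{j∈ℤ} ‖g_j‖_{L^2}^2)^{1/2}. -/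
open MeasureTheory ENNReal
open scoped FourierTransform NNReal

noncomputable section

/-- A jump collection: a sequence of measurable integer-valued functions on `ℝ`,
nondecreasing in the index. -/
def IsJumpCollection (Nk : ℕ → ℝ → ℤ) : Prop :=
  (∀ k, Measurable (Nk k)) ∧ ∀ (k : ℕ) (x : ℝ), Nk k x ≤ Nk (k + 1) x

/-- The dilate `φ_i(x) = 2^i φ(2^i x)` of a Schwartz function `φ`. -/
def dilate (φ : SchwartzMap ℝ ℂ) (i : ℤ) : ℝ → ℂ :=
  fun x => ((2 : ℝ) ^ i : ℝ) • φ (((2 : ℝ) ^ i) * x)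

/-- Convolution `(φ_i * h)(x) = ∫ φ_i(x - y) h(y) dy`. -/
def conv (φi : ℝ → ℂ) (h : ℝ → ℂ) : ℝ → ℂ :=
  fun x => ∫ y : ℝ, φi (x - y) * h y

namespace JumpAux


def Vr (s : ℂ × ℂ × ℂ) : ℝ := ‖s.1‖ ^ 2 + ‖s.2.1‖ ^ 2 + ‖s.2.2‖ ^ 2

def cand (s : ℂ × ℂ × ℂ) (d d' : ℂ) : ℂ × ℂ × ℂ := (s.1 + d, s.2.1 + d', s.2.2 + s.1 * d')

def stp (s : ℂ × ℂ × ℂ) (d d' : ℂ) : ℂ × ℂ × ℂ :=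
  if Vr (cand s d d') ≤ 1 / 100 then cand s d d' else 0

def st (M M' : ℕ → ℂ) : ℕ → ℂ × ℂ × ℂ
  | 0 => 0
  | n + 1 => stp (st M M' n) (M (n + 1) - M n) (M' (n + 1) - M' n)

def rs (M M' : ℕ → ℂ) (n : ℕ) : ℝ :=
  if Vr (cand (st M M' n) (M (n + 1) - M n) (M' (n + 1) - M' n)) ≤ 1 / 100 then 0 else 1

lemma rs_nonneg (M M' : ℕ → ℂ) (n : ℕ) : 0 ≤ rs M M' n := by
  unfold rs; split_ifs <;> norm_num

lemma Vr_nonneg (s : ℂ × ℂ × ℂ) : 0 ≤ Vr s := by unfold Vr; positivity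

lemma Vr_st_le (M M' : ℕ → ℂ) (n : ℕ) : Vr (st M M' n) ≤ 1 / 100 := by
  cases n with
  | zero => simp [st, Vr]
  | succ n =>
    simp only [st, stp]
    split_ifs with h
    · exact h
    · simp [Vr]

lemma st_bounds (M M' : ℕ → ℂ) (n : ℕ) :
    ‖(st M M' n).1‖ ≤ 1 / 10 ∧ ‖(st M M' n).2.1‖ ≤ 1 / 10 ∧ ‖(st M M' n).2.2‖ ≤ 1 / 10 := by
  have h := Vr_st_le M M' n
  unfold Vr at h
  refine ⟨?_, ?_, ?_⟩ <;>
  · apply le_of_sq_le_sq _ (by norm_num)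
    nlinarith [sq_nonneg ‖(st M M' n).1‖, sq_nonneg ‖(st M M' n).2.1‖,
      sq_nonneg ‖(st M M' n).2.2‖]

def PP (A B : ℕ → ℂ) (m n : ℕ) : ℂ := ∑ j ∈ Finset.Ico m n, (A j - A m) * (B (j + 1) - B j)

lemma no_reset (M M' : ℕ → ℂ) (m n : ℕ) (hmn : m ≤ n)
    (h : ∀ j ∈ Finset.Ico m n, rs M M' j = 0) :
    (st M M' n).1 = (st M M' m).1 + (M n - M m) ∧
    (st M M' n).2.1 = (st M M' m).2.1 + (M' n - M' m) ∧
    (st M M' n).2.2 = (st M M' m).2.2 + (st M M' m).1 * (M' n - M' m) + PP M M' m n := by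
  induction n, hmn using Nat.le_induction with
  | base => simp [PP]
  | succ n hmn ih =>
    have ih := ih (fun j hj => h j (by simp at hj ⊢; omega))
    have hn := h n (by simp; omega)
    have hc : Vr (cand (st M M' n) (M (n + 1) - M n) (M' (n + 1) - M' n)) ≤ 1 / 100 := by
      by_contra hc
      simp [rs] at hn
      exact hc (by simpa using hn)
    obtain ⟨h1, h2, h3⟩ := ih
    have hst : st M M' (n + 1) = cand (st M M' n) (M (n + 1) - M n) (M' (n + 1) - M' n) := by
      simp only [st, stp, if_pos hc]
    have hP : PP M M' m (n + 1) = PP M M' m n + (M n - M m) * (M' (n + 1) - M' n) := by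
      unfold PP; rw [Finset.sum_Ico_succ_top hmn]
    rw [hst, hP]
    simp only [cand, h1, h2, h3]
    refine ⟨by ring, by ring, by ring⟩

lemma decomp (A B M M' : ℕ → ℂ) (m n : ℕ) (hmn : m ≤ n) :
    PP A B m n = PP M M' m n
      + ∑ j ∈ Finset.Ico m n, (A j - M j) * (B (j + 1) - B j)
      - (A m - M m) * (B n - B m) + (M n - M m) * (B n - M' n)
      - ∑ j ∈ Finset.Ico m n, (M (j + 1) - M j) * (B (j + 1) - M' (j + 1)) := by
  induction n, hmn using Nat.le_induction with
  | base => simp [PP]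
  | succ n hmn ih =>
    unfold PP at *
    simp only [Finset.sum_Ico_succ_top hmn]
    rw [ih]; ring

def ww (A B M M' : ℕ → ℂ) (j : ℕ) : ℝ :=
  ‖A j - M j‖ ^ 2 + ‖B j - M' j‖ ^ 2 + ‖B (j + 1) - M' (j + 1)‖ ^ 2
    + ‖B (j + 1) - B j‖ ^ 2 + ‖M (j + 1) - M j‖ ^ 2

lemma ww_nonneg (A B M M' : ℕ → ℂ) (j : ℕ) : 0 ≤ ww A B M M' j := by
  unfold ww; positivity

lemma pointwise_jump (A B M M' : ℕ → ℂ) (m n : ℕ) (hmn : m ≤ n) (h : 1 < ‖PP A B m n‖) :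
    1 ≤ 10 * ∑ j ∈ Finset.Ico m n, (rs M M' j + ww A B M M' j) := by
  have hlt : m < n := by
    rcases hmn.lt_or_eq with h1 | h1
    · exact h1
    · subst h1; simp [PP] at h; norm_num at h
  rw [Finset.sum_add_distrib]
  have hr0 : 0 ≤ ∑ j ∈ Finset.Ico m n, rs M M' j := Finset.sum_nonneg fun j _ => rs_nonneg _ _ _
  have hw0 : 0 ≤ ∑ j ∈ Finset.Ico m n, ww A B M M' j :=
    Finset.sum_nonneg fun j _ => ww_nonneg _ _ _ _ _
  by_cases hr : ∀ j ∈ Finset.Ico m n, rs M M' j = 0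
  swap
  · push Not at hr
    obtain ⟨j, hj, hjr⟩ := hr
    have h1 : rs M M' j = 1 := by
      unfold rs at *; split_ifs at * <;> simp_all
    have := Finset.single_le_sum (f := fun j => rs M M' j) (fun j _ => rs_nonneg M M' j) hj
    simp only [h1] at this
    linarith
  by_contra hcon
  push Not at hcon
  set S := ∑ j ∈ Finset.Ico m n, ww A B M M' j with hS
  have hSlt : S < 1 / 10 := by linarith
  obtain ⟨h1, h2, h3⟩ := no_reset M M' m n hmn hr
  obtain ⟨a1, a2, a3⟩ := st_bounds M M' m
  obtain ⟨b1, b2, b3⟩ := st_bounds M M' n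
  have hM : ‖M n - M m‖ ≤ 1 / 5 := by
    have : M n - M m = (st M M' n).1 - (st M M' m).1 := by rw [h1]; ring
    rw [this]; refine (norm_sub_le _ _).trans (by linarith)
  have hM' : ‖M' n - M' m‖ ≤ 1 / 5 := by
    have : M' n - M' m = (st M M' n).2.1 - (st M M' m).2.1 := by rw [h2]; ring
    rw [this]; refine (norm_sub_le _ _).trans (by linarith)
  have hP : ‖PP M M' m n‖ ≤ 22 / 100 := by
    have : PP M M' m n = (st M M' n).2.2 - (st M M' m).2.2
        - (st M M' m).1 * (M' n - M' m) := by rw [h3]; ring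
    rw [this]
    refine (norm_sub_le _ _).trans ?_
    have := norm_sub_le (st M M' n).2.2 (st M M' m).2.2
    rw [norm_mul]
    have := mul_le_mul a1 hM' (norm_nonneg _) (by norm_num)
    linarith
  have hm : ww A B M M' m ≤ S :=
    Finset.single_le_sum (f := fun j => ww A B M M' j) (fun j _ => ww_nonneg A B M M' j)
      (by simp; omega)
  have hn : ww A B M M' (n - 1) ≤ S :=
    Finset.single_le_sum (f := fun j => ww A B M M' j) (fun j _ => ww_nonneg A B M M' j)
      (by simp; omega)
  have e1 : ‖A m - M m‖ ^ 2 ≤ S := by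
    refine le_trans ?_ hm; unfold ww
    nlinarith [sq_nonneg ‖B m - M' m‖, sq_nonneg ‖B (m+1) - M' (m+1)‖, sq_nonneg ‖B (m+1) - B m‖,
      sq_nonneg ‖M (m+1) - M m‖]
  have e2 : ‖B m - M' m‖ ^ 2 ≤ S := by
    refine le_trans ?_ hm; unfold ww
    nlinarith [sq_nonneg ‖A m - M m‖, sq_nonneg ‖B (m+1) - M' (m+1)‖, sq_nonneg ‖B (m+1) - B m‖,
      sq_nonneg ‖M (m+1) - M m‖]
  have e3 : ‖B n - M' n‖ ^ 2 ≤ S := by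
    refine le_trans ?_ hn; unfold ww
    have : n - 1 + 1 = n := by omega
    rw [this]
    nlinarith [sq_nonneg ‖A (n-1) - M (n-1)‖, sq_nonneg ‖B (n-1) - M' (n-1)‖,
      sq_nonneg ‖B n - B (n-1)‖, sq_nonneg ‖M n - M (n-1)‖]
  have e1' : ‖A m - M m‖ ≤ 32 / 100 := le_of_sq_le_sq (by linarith) (by norm_num)
  have e2' : ‖B m - M' m‖ ≤ 32 / 100 := le_of_sq_le_sq (by linarith) (by norm_num)
  have e3' : ‖B n - M' n‖ ≤ 32 / 100 := le_of_sq_le_sq (by linarith) (by norm_num)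
  have hs : ‖∑ j ∈ Finset.Ico m n, (A j - M j) * (B (j + 1) - B j)‖
      + ‖∑ j ∈ Finset.Ico m n, (M (j + 1) - M j) * (B (j + 1) - M' (j + 1))‖ ≤ S / 2 := by
    refine (add_le_add (norm_sum_le _ _) (norm_sum_le _ _)).trans ?_
    rw [← Finset.sum_add_distrib, hS, Finset.sum_div]
    refine Finset.sum_le_sum fun j _ => ?_
    rw [norm_mul, norm_mul]; unfold ww
    nlinarith [sq_nonneg (‖A j - M j‖ - ‖B (j + 1) - B j‖),
      sq_nonneg (‖M (j + 1) - M j‖ - ‖B (j + 1) - M' (j + 1)‖), sq_nonneg ‖B j - M' j‖]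
  have hB : ‖B n - B m‖ ≤ 84 / 100 := by
    have : B n - B m = (M' n - M' m) + (B n - M' n) - (B m - M' m) := by ring
    rw [this]
    have := norm_sub_le ((M' n - M' m) + (B n - M' n)) (B m - M' m)
    have := norm_add_le (M' n - M' m) (B n - M' n)
    linarith
  have hd := decomp A B M M' m n hmn
  have t1 : ‖(A m - M m) * (B n - B m)‖ ≤ 32/100 * (84/100) := by
    rw [norm_mul]; exact mul_le_mul e1' hB (norm_nonneg _) (by norm_num)
  have t2 : ‖(M n - M m) * (B n - M' n)‖ ≤ 1/5 * (32/100) := by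
    rw [norm_mul]; exact mul_le_mul hM e3' (norm_nonneg _) (by norm_num)
  rw [hd] at h
  have k1 := norm_sub_le (PP M M' m n
      + ∑ j ∈ Finset.Ico m n, (A j - M j) * (B (j + 1) - B j)
      - (A m - M m) * (B n - B m) + (M n - M m) * (B n - M' n))
      (∑ j ∈ Finset.Ico m n, (M (j + 1) - M j) * (B (j + 1) - M' (j + 1)))
  have k2 := norm_add_le (PP M M' m n
      + ∑ j ∈ Finset.Ico m n, (A j - M j) * (B (j + 1) - B j)
      - (A m - M m) * (B n - B m)) ((M n - M m) * (B n - M' n))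
  have k3 := norm_sub_le (PP M M' m n
      + ∑ j ∈ Finset.Ico m n, (A j - M j) * (B (j + 1) - B j))
      ((A m - M m) * (B n - B m))
  have k4 := norm_add_le (PP M M' m n)
      (∑ j ∈ Finset.Ico m n, (A j - M j) * (B (j + 1) - B j))
  linarith

/-- Counting over a finite set of jumps. -/
lemma count_le (A B M M' : ℕ → ℂ) (T : ℕ) (n : ℕ → ℕ) (hn : Monotone n) (S : Finset ℕ)
    (hS : ∀ k ∈ S, n (k + 1) ≤ T ∧ 1 < ‖PP A B (n k) (n (k + 1))‖) :
    (S.card : ℝ) ≤ 10 * ∑ j ∈ Finset.range T, (rs M M' j + ww A B M M' j) := by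
  have hdis : (S : Set ℕ).PairwiseDisjoint (fun k => Finset.Ico (n k) (n (k + 1))) := by
    intro k _ l _ hkl
    have := hn.pairwise_disjoint_on_Ico_succ hkl
    simp only [Function.onFun, Order.succ_eq_add_one] at this ⊢
    rw [← Finset.disjoint_coe]
    simpa using this
  calc (S.card : ℝ) = ∑ k ∈ S, (1 : ℝ) := by simp
    _ ≤ ∑ k ∈ S, 10 * ∑ j ∈ Finset.Ico (n k) (n (k + 1)), (rs M M' j + ww A B M M' j) :=
        Finset.sum_le_sum fun k hk =>
          pointwise_jump A B M M' _ _ (hn (Nat.le_succ k)) (hS k hk).2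
    _ = 10 * ∑ j ∈ S.biUnion (fun k => Finset.Ico (n k) (n (k + 1))),
          (rs M M' j + ww A B M M' j) := by
        rw [← Finset.mul_sum, Finset.sum_biUnion hdis]
    _ ≤ _ := by
        refine mul_le_mul_of_nonneg_left ?_ (by norm_num)
        refine Finset.sum_le_sum_of_subset_of_nonneg ?_ ?_
        · intro j hj
          simp only [Finset.mem_biUnion, Finset.mem_Ico, Finset.mem_range] at hj ⊢
          obtain ⟨k, hk, _, h2⟩ := hj
          exact lt_of_lt_of_le h2 (hS k hk).1
        · intro j _ _
          exact add_nonneg (rs_nonneg _ _ _) (ww_nonneg _ _ _ _ _)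



def dy (n : ℤ) (x : ℝ) : ℤ := ⌊(2 : ℝ) ^ n * x⌋

def sw (n : ℤ) (x : ℝ) : ℝ := if Even (dy n x) then x + (2 : ℝ) ^ (-n) else x - (2 : ℝ) ^ (-n)

lemma two_zpow_pos (n : ℤ) : 0 < (2 : ℝ) ^ n := by positivity

lemma two_zpow_mul_neg (n : ℤ) : (2 : ℝ) ^ n * (2 : ℝ) ^ (-n) = 1 := by
  rw [← zpow_add₀ (by norm_num)]; simp

lemma measurable_dy (n : ℤ) : Measurable (dy n) :=
  Int.measurable_floor.comp (measurable_const.mul measurable_id)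

lemma dy_add (n : ℤ) (x : ℝ) : dy n (x + (2 : ℝ) ^ (-n)) = dy n x + 1 := by
  unfold dy; rw [mul_add, two_zpow_mul_neg, Int.floor_add_one]

lemma dy_sub (n : ℤ) (x : ℝ) : dy n (x - (2 : ℝ) ^ (-n)) = dy n x - 1 := by
  unfold dy; rw [mul_sub, two_zpow_mul_neg, Int.floor_sub_one]

lemma dy_pt (n k : ℤ) : dy n (k * (2 : ℝ) ^ (-n)) = k := by
  unfold dy
  rw [mul_left_comm, two_zpow_mul_neg]; simp

lemma dy_half (n : ℤ) (x : ℝ) : dy n x = dy (n + 1) x / 2 := by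
  unfold dy
  have h : (2 : ℝ) ^ (n + 1) = 2 * 2 ^ n := by rw [zpow_add₀ (by norm_num)]; ring
  rw [h]
  have h1 := Int.floor_le (2 * (2 : ℝ) ^ n * x)
  have h2 := Int.lt_floor_add_one (2 * (2 : ℝ) ^ n * x)
  set m := ⌊2 * (2 : ℝ) ^ n * x⌋
  rw [Int.floor_eq_iff]
  have h3 : 2 * (m / 2) ≤ m := by omega
  have h4 : m + 1 ≤ 2 * (m / 2) + 2 := by omega
  have h3' : (2 : ℝ) * ((m / 2 : ℤ) : ℝ) ≤ m := by exact_mod_cast h3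
  have h4' : (m : ℝ) + 1 ≤ 2 * ((m / 2 : ℤ) : ℝ) + 2 := by exact_mod_cast h4
  constructor <;> linarith

lemma dy_sw (n : ℤ) (x : ℝ) : dy n (sw n x) = if Even (dy n x) then dy n x + 1 else dy n x - 1 := by
  unfold sw; split_ifs
  · exact dy_add n x
  · exact dy_sub n x

lemma dy_sw_parent (n : ℤ) (x : ℝ) : dy n (sw (n + 1) x) = dy n x := by
  rw [dy_half n (sw (n + 1) x), dy_half n x, dy_sw]
  split_ifs with h
  · obtain ⟨r, hr⟩ := h; omega
  · rw [Int.not_even_iff_odd] at h; obtain ⟨r, hr⟩ := h; omega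

lemma lintegral_sw (n : ℤ) (h : ℝ → ℝ≥0∞) (hh : Measurable h) :
    ∫⁻ x, h (sw n x) = ∫⁻ x, h x := by
  classical
  set E : Set ℝ := {x | Even (dy n x)} with hE
  have hEm : MeasurableSet E := measurable_dy n (MeasurableSet.of_discrete (s := {k : ℤ | Even k}))
  have key : ∀ x, h (sw n x) = Eᶜ.indicator h (x + (2 : ℝ) ^ (-n))
      + E.indicator h (x - (2 : ℝ) ^ (-n)) := by
    intro x
    by_cases hx : Even (dy n x)
    · have h1 : x + (2 : ℝ) ^ (-n) ∈ Eᶜ := by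
        simp only [hE, Set.mem_compl_iff, Set.mem_ofPred_eq, dy_add]
        rw [Int.even_add_one]; simpa using hx
      have h2 : x - (2 : ℝ) ^ (-n) ∉ E := by
        simp only [hE, Set.mem_ofPred_eq, dy_sub]
        rw [Int.even_sub_one]; simpa using hx
      rw [Set.indicator_of_mem h1, Set.indicator_of_notMem h2]
      simp [sw, hx]
    · have h1 : x + (2 : ℝ) ^ (-n) ∉ Eᶜ := by
        simp only [hE, Set.mem_compl_iff, Set.mem_ofPred_eq, dy_add]
        rw [Int.even_add_one]; simpa using hx
      have h2 : x - (2 : ℝ) ^ (-n) ∈ E := by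
        simp only [hE, Set.mem_ofPred_eq, dy_sub]
        rw [Int.even_sub_one]; simpa using hx
      rw [Set.indicator_of_notMem h1, Set.indicator_of_mem h2]
      simp [sw, hx]
  simp_rw [key]
  have m1 : Measurable (Eᶜ.indicator h) := hh.indicator hEm.compl
  have m2 : Measurable (E.indicator h) := hh.indicator hEm
  have m1' : Measurable (fun x => Eᶜ.indicator h (x + (2 : ℝ) ^ (-n))) :=
    m1.comp (measurable_id.add_const _)
  rw [lintegral_add_left m1']
  rw [lintegral_add_right_eq_self (fun x => Eᶜ.indicator h x),
    lintegral_sub_right_eq_self (fun x => E.indicator h x), ← lintegral_add_left m1]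
  congr 1; ext x
  by_cases hx : x ∈ E <;> simp [hx]

/-- `h` is constant on dyadic intervals of length `2^{-n}`. -/
def Lev {β : Type*} (n : ℤ) (h : ℝ → β) : Prop := ∀ x y, dy n x = dy n y → h x = h y

lemma Lev.measurable {β : Type*} [MeasurableSpace β] {n : ℤ} {h : ℝ → β} (hh : Lev n h) :
    Measurable h := by
  have : h = (fun k : ℤ => h (k * (2 : ℝ) ^ (-n))) ∘ dy n := by
    ext x
    simp only [Function.comp]
    exact hh _ _ (dy_pt n _).symm
  rw [this]
  exact (Measurable.of_discrete).comp (measurable_dy n)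

lemma Lev.succ {β : Type*} {n : ℤ} {h : ℝ → β} (hh : Lev n h) : Lev (n + 1) h := by
  intro x y hxy
  exact hh x y (by rw [dy_half n x, dy_half n y, hxy])

/-- Martingale-type data. -/
structure Mart (a : ℤ) (M : ℕ → ℝ → ℂ) : Prop where
  lev : ∀ t : ℕ, Lev (a + t) (M t)
  swap : ∀ (t : ℕ) (x : ℝ), M (t + 1) (sw (a + t + 1) x) - M t x = -(M (t + 1) x - M t x)

variable {a : ℤ} {M M' : ℕ → ℝ → ℂ}

lemma lev_st (hM : Mart a M) (hM' : Mart a M') (t : ℕ) :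
    Lev (a + t) (fun x => st (fun s => M s x) (fun s => M' s x) t) := by
  induction t with
  | zero => intro x y _; rfl
  | succ t ih =>
    intro x y hxy
    have hxy' : dy (a + t) x = dy (a + t) y := by
      rw [dy_half _ x, dy_half _ y]
      push_cast at hxy
      rw [add_assoc, hxy]
    simp only [st]
    have := ih x y hxy'
    simp only at this
    rw [this, hM.lev _ x y hxy, hM.lev _ x y hxy', hM'.lev _ x y hxy, hM'.lev _ x y hxy']

lemma energy_step (hM : Mart a M) (hM' : Mart a M') (t : ℕ) :
    (∫⁻ x, ENNReal.ofReal (1 / 100 * rs (fun s => M s x) (fun s => M' s x) t))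
      + ∫⁻ x, ENNReal.ofReal (Vr (st (fun s => M s x) (fun s => M' s x) (t + 1)))
    ≤ (∫⁻ x, ENNReal.ofReal (Vr (st (fun s => M s x) (fun s => M' s x) t)))
      + ∫⁻ x, ENNReal.ofReal (‖M (t + 1) x - M t x‖ ^ 2 + 2 * ‖M' (t + 1) x - M' t x‖ ^ 2) := by
  set s : ℝ → ℂ × ℂ × ℂ := fun x => st (fun s => M s x) (fun s => M' s x) t with hs
  set d : ℝ → ℂ := fun x => M (t + 1) x - M t x with hd
  set d' : ℝ → ℂ := fun x => M' (t + 1) x - M' t x with hd'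
  have hslev : Lev (a + t) s := lev_st hM hM' t
  have hdl : Lev (a + t + 1) d := by
    intro x y hxy
    have h1 := hM.lev (t + 1) x y (by push_cast; rw [← add_assoc]; exact hxy)
    have h2 := (hM.lev t).succ x y hxy
    simp only [hd, h1, h2]
  have hdl' : Lev (a + t + 1) d' := by
    intro x y hxy
    have h1 := hM'.lev (t + 1) x y (by push_cast; rw [← add_assoc]; exact hxy)
    have h2 := (hM'.lev t).succ x y hxy
    simp only [hd', h1, h2]
  have hc : Lev (a + t + 1) (fun x => Vr (cand (s x) (d x) (d' x))) := by
    intro x y hxy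
    simp only [hslev.succ x y hxy, hdl x y hxy, hdl' x y hxy]
  have hcm : Measurable (fun x => ENNReal.ofReal (Vr (cand (s x) (d x) (d' x)))) :=
    hc.measurable.ennreal_ofReal
  have hrl : Lev (a + t + 1)
      (fun x => ENNReal.ofReal (1 / 100 * rs (fun s => M s x) (fun s => M' s x) t)) := by
    intro x y hxy
    have := hc x y hxy
    simp only [hs, hd, hd'] at this
    simp only [rs, this]
  have hsl1 : ∀ x, s (sw (a + t + 1) x) = s x := fun x => hslev _ _ (dy_sw_parent _ x)
  have hd1 : ∀ x, d (sw (a + t + 1) x) = - d x := by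
    intro x
    simp only [hd]
    rw [hM.lev t (sw (a + t + 1) x) x (dy_sw_parent _ x), hM.swap]
  have hd1' : ∀ x, d' (sw (a + t + 1) x) = - d' x := by
    intro x
    simp only [hd']
    rw [hM'.lev t (sw (a + t + 1) x) x (dy_sw_parent _ x), hM'.swap]
  have para : ∀ z w : ℂ, ‖z + w‖ ^ 2 + ‖z - w‖ ^ 2 = 2 * (‖z‖ ^ 2 + ‖w‖ ^ 2) := by
    intro z w
    have := parallelogram_law_with_norm ℝ z w
    nlinarith [this]
  have hpt : ∀ x, Vr (cand (s x) (d x) (d' x))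
      + Vr (cand (s (sw (a + t + 1) x)) (d (sw (a + t + 1) x)) (d' (sw (a + t + 1) x)))
      ≤ 2 * (Vr (s x) + (‖d x‖ ^ 2 + 2 * ‖d' x‖ ^ 2)) := by
    intro x
    rw [hsl1, hd1, hd1']
    simp only [Vr, cand, mul_neg, ← sub_eq_add_neg]
    have p1 := para (s x).1 (d x)
    have p2 := para (s x).2.1 (d' x)
    have p3 := para (s x).2.2 ((s x).1 * d' x)
    have b := (st_bounds (fun s => M s x) (fun s => M' s x) t).1
    have : ‖(s x).1 * d' x‖ ^ 2 ≤ ‖d' x‖ ^ 2 := by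
      rw [norm_mul, mul_pow]
      have : ‖(s x).1‖ ^ 2 ≤ 1 := by
        have b' : ‖(s x).1‖ ≤ 1 / 10 := b
        nlinarith [norm_nonneg (s x).1]
      nlinarith [sq_nonneg ‖d' x‖]
    nlinarith
  have hmainint : ∫⁻ x, ENNReal.ofReal (Vr (cand (s x) (d x) (d' x)))
      ≤ (∫⁻ x, ENNReal.ofReal (Vr (s x))) + ∫⁻ x, ENNReal.ofReal (‖d x‖ ^ 2 + 2 * ‖d' x‖ ^ 2) := by
    have h2 : 2 * ∫⁻ x, ENNReal.ofReal (Vr (cand (s x) (d x) (d' x)))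
        ≤ 2 * ((∫⁻ x, ENNReal.ofReal (Vr (s x)))
          + ∫⁻ x, ENNReal.ofReal (‖d x‖ ^ 2 + 2 * ‖d' x‖ ^ 2)) := by
      have hsm : Measurable (fun x => ENNReal.ofReal (Vr (s x))) :=
        Lev.measurable (n := a + t) (fun x y hxy => by simp only [hslev x y hxy])
      rw [← lintegral_add_left hsm,
        ← lintegral_const_mul' 2 (fun x => ENNReal.ofReal (Vr (s x)) + _) (by simp), two_mul]
      nth_rewrite 2 [← lintegral_sw (a + t + 1) _ hcm]
      rw [← lintegral_add_left hcm]
      refine lintegral_mono fun x => ?_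
      simp only
      rw [← ENNReal.ofReal_add (Vr_nonneg _) (Vr_nonneg _),
        ← ENNReal.ofReal_add (Vr_nonneg _) (by positivity)]
      refine (ENNReal.ofReal_le_ofReal (hpt x)).trans ?_
      rw [ENNReal.ofReal_mul (by norm_num)]
      simp
    exact (ENNReal.mul_le_mul_iff_right (by simp) (by simp)).1 h2
  refine le_trans ?_ hmainint
  rw [← lintegral_add_left hrl.measurable]
  refine lintegral_mono fun x => ?_
  simp only
  rw [← ENNReal.ofReal_add (mul_nonneg (by norm_num) (rs_nonneg _ _ _)) (Vr_nonneg _)]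
  refine ENNReal.ofReal_le_ofReal ?_
  simp only [st, rs, stp, hs, hd, hd']
  split_ifs with h
  · linarith
  · push Not at h
    have : Vr 0 = 0 := by simp [Vr]
    rw [this]; linarith

lemma energy (hM : Mart a M) (hM' : Mart a M') (T : ℕ) :
    (∑ t ∈ Finset.range T,
      ∫⁻ x, ENNReal.ofReal (1 / 100 * rs (fun s => M s x) (fun s => M' s x) t))
      + ∫⁻ x, ENNReal.ofReal (Vr (st (fun s => M s x) (fun s => M' s x) T))
    ≤ ∑ t ∈ Finset.range T,
      ∫⁻ x, ENNReal.ofReal (‖M (t + 1) x - M t x‖ ^ 2 + 2 * ‖M' (t + 1) x - M' t x‖ ^ 2) := by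
  induction T with
  | zero => simp [st, Vr]
  | succ T ih =>
    rw [Finset.sum_range_succ, Finset.sum_range_succ, add_assoc]
    refine (add_le_add_right (energy_step hM hM' T) _).trans ?_
    rw [← add_assoc]
    exact add_le_add_left ih _

lemma measurable_rs (hM : Mart a M) (hM' : Mart a M') (t : ℕ) :
    Measurable (fun x => rs (fun s => M s x) (fun s => M' s x) t) := by
  refine Lev.measurable (n := a + t + 1) ?_
  intro x y hxy
  have h0 := (lev_st hM hM' t).succ x y hxy
  have h1 := hM.lev (t + 1) x y (by push_cast; rw [← add_assoc]; exact hxy)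
  have h2 := (hM.lev t).succ x y hxy
  have h3 := hM'.lev (t + 1) x y (by push_cast; rw [← add_assoc]; exact hxy)
  have h4 := (hM'.lev t).succ x y hxy
  simp only [rs, h0, h1, h2, h3, h4]



lemma lintegral_cs (k f : ℝ → ℝ≥0∞) (hk : Measurable k) (hf : Measurable f) :
    (∫⁻ y, k y * f y) ^ 2 ≤ (∫⁻ y, k y) * ∫⁻ y, k y * f y ^ 2 := by
  have hs : ∀ a : ℝ≥0∞, a ^ (1 / 2 : ℝ) * a ^ (1 / 2 : ℝ) = a := by
    intro a
    rw [← ENNReal.rpow_add_of_nonneg _ _ (by norm_num) (by norm_num)]; norm_num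
  have hs2 : ∀ a : ℝ≥0∞, (a ^ (1 / 2 : ℝ)) ^ 2 = a := by
    intro a; rw [sq, hs]
  have h := ENNReal.lintegral_mul_le_Lp_mul_Lq volume Real.HolderConjugate.two_two
    (f := fun y => k y ^ (1 / 2 : ℝ)) (g := fun y => k y ^ (1 / 2 : ℝ) * f y)
    (hk.pow_const _).aemeasurable ((hk.pow_const _).mul hf).aemeasurable
  simp only [Pi.mul_apply, ENNReal.rpow_two] at h
  have e1 : ∀ y, k y ^ (1 / 2 : ℝ) * (k y ^ (1 / 2 : ℝ) * f y) = k y * f y := by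
    intro y; rw [← mul_assoc, hs]
  have e2 : ∀ y, (k y ^ (1 / 2 : ℝ) * f y) ^ 2 = k y * f y ^ 2 := by
    intro y; rw [mul_pow, hs2]
  simp_rw [e1, e2, hs2] at h
  calc (∫⁻ y, k y * f y) ^ 2 ≤ _ := pow_le_pow_left₀ (by simp) h 2
    _ = _ := by rw [mul_pow, hs2, hs2]

lemma schur (k : ℝ → ℝ → ℝ≥0∞) (hk : Measurable (Function.uncurry k)) (f : ℝ → ℝ≥0∞)
    (hf : Measurable f) (A B : ℝ≥0∞) (hA : ∀ x, ∫⁻ y, k x y ≤ A) (hB : ∀ y, ∫⁻ x, k x y ≤ B) :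
    ∫⁻ x, (∫⁻ y, k x y * f y) ^ 2 ≤ A * B * ∫⁻ y, f y ^ 2 := by
  have hkx : ∀ x, Measurable (k x) := fun x => hk.comp (measurable_const.prodMk measurable_id)
  have hky : ∀ y, Measurable (fun x => k x y) :=
    fun y => hk.comp (measurable_id.prodMk measurable_const)
  have hm : Measurable (Function.uncurry fun x y => k x y * f y ^ 2) :=
    hk.mul ((hf.comp measurable_snd).pow_const 2)
  calc ∫⁻ x, (∫⁻ y, k x y * f y) ^ 2
      ≤ ∫⁻ x, A * ∫⁻ y, k x y * f y ^ 2 := lintegral_mono fun x =>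
        (lintegral_cs _ _ (hkx x) hf).trans (mul_le_mul_left (hA x) _)
    _ = A * ∫⁻ x, ∫⁻ y, k x y * f y ^ 2 := by
        rw [lintegral_const_mul]
        exact hm.lintegral_prod_right'
    _ = A * ∫⁻ y, ∫⁻ x, k x y * f y ^ 2 := by
        rw [lintegral_lintegral_swap hm.aemeasurable]
    _ = A * ∫⁻ y, (∫⁻ x, k x y) * f y ^ 2 := by
        congr 2; ext y; rw [lintegral_mul_const _ (hky y)]
    _ ≤ A * ∫⁻ y, B * f y ^ 2 := by
        gcongr with y; exact hB y
    _ = _ := by rw [lintegral_const_mul _ (hf.pow_const 2), mul_assoc]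

lemma lintegral_scale (i : ℤ) (h : ℝ → ℝ≥0∞) (hh : Measurable h) :
    ∫⁻ x, h ((2 : ℝ) ^ i * x) = ENNReal.ofReal ((2 : ℝ) ^ (-i)) * ∫⁻ x, h x := by
  have h1 := Real.map_volume_mul_left (a := (2 : ℝ) ^ i) (by positivity)
  have h2 : ∫⁻ x, h ((2 : ℝ) ^ i * x) = ∫⁻ x, h x ∂(Measure.map (fun x => (2 : ℝ) ^ i * x) volume) := by
    rw [lintegral_map hh (by fun_prop)]
  rw [h2, h1, lintegral_smul_measure, abs_of_pos (by positivity), zpow_neg]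
  rfl

lemma ofReal_two_mul_neg (i : ℤ) :
    ENNReal.ofReal ((2 : ℝ) ^ i) * ENNReal.ofReal ((2 : ℝ) ^ (-i)) = 1 := by
  rw [← ENNReal.ofReal_mul (by positivity), two_zpow_mul_neg]; simp

lemma lintegral_dil (i : ℤ) (h : ℝ → ℝ≥0∞) (hh : Measurable h) (x : ℝ) :
    ∫⁻ y, ENNReal.ofReal ((2 : ℝ) ^ i) * h ((2 : ℝ) ^ i * (x - y)) = ∫⁻ y, h y := by
  rw [lintegral_const_mul' _ _ ENNReal.ofReal_ne_top,
    lintegral_sub_left_eq_self (fun y => h ((2 : ℝ) ^ i * y)) x, lintegral_scale i h hh,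
    ← mul_assoc, ofReal_two_mul_neg, one_mul]

lemma lintegral_dil' (i : ℤ) (h : ℝ → ℝ≥0∞) (hh : Measurable h) (y : ℝ) :
    ∫⁻ x, ENNReal.ofReal ((2 : ℝ) ^ i) * h ((2 : ℝ) ^ i * (x - y)) = ∫⁻ y, h y := by
  rw [lintegral_const_mul' _ _ ENNReal.ofReal_ne_top,
    lintegral_sub_right_eq_self (fun y => h ((2 : ℝ) ^ i * y)) y, lintegral_scale i h hh,
    ← mul_assoc, ofReal_two_mul_neg, one_mul]

lemma dil_enorm (φ : SchwartzMap ℝ ℂ) (i : ℤ) (x : ℝ) :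
    ‖dilate φ i x‖ₑ = ENNReal.ofReal ((2 : ℝ) ^ i) * ‖φ ((2 : ℝ) ^ i * x)‖ₑ := by
  unfold dilate
  rw [enorm_smul, Real.enorm_eq_ofReal (by positivity)]

lemma continuous_dil (φ : SchwartzMap ℝ ℂ) (i : ℤ) : Continuous (dilate φ i) := by
  unfold dilate
  have := φ.continuous
  fun_prop

lemma memLp_dil (φ : SchwartzMap ℝ ℂ) (i : ℤ) (x : ℝ) :
    MemLp (fun y => dilate φ i (x - y)) 2 := by
  have hc : Continuous (fun y => dilate φ i (x - y)) := (continuous_dil φ i).comp (by fun_prop)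
  rw [memLp_two_iff_integrable_sq_norm hc.aestronglyMeasurable]
  have h1 : Integrable (fun x => ‖φ x‖ ^ 2) :=
    (memLp_two_iff_integrable_sq_norm φ.continuous.aestronglyMeasurable).1 (φ.memLp 2)
  have h2 := ((h1.comp_mul_left' (R := (2 : ℝ) ^ i) (by positivity)).comp_sub_left x).const_mul
    (((2 : ℝ) ^ i) ^ 2)
  refine h2.congr (Filter.Eventually.of_forall fun y => ?_)
  simp only [dilate, norm_smul, Real.norm_eq_abs, abs_of_pos (two_zpow_pos i), mul_pow]

lemma integrable_conv (φ : SchwartzMap ℝ ℂ) (i : ℤ) {f : ℝ → ℂ} (hf : MemLp f 2) (x : ℝ) :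
    Integrable (fun y => dilate φ i (x - y) * f y) :=
  (memLp_dil φ i x).integrable_mul hf

lemma measurable_conv (φ : SchwartzMap ℝ ℂ) (i : ℤ) {f : ℝ → ℂ} (hfm : Measurable f) :
    Measurable (conv (dilate φ i) f) := by
  unfold conv
  have : StronglyMeasurable (Function.uncurry fun x y => dilate φ i (x - y) * f y) := by
    apply Measurable.stronglyMeasurable
    have h1 : Measurable (fun p : ℝ × ℝ => dilate φ i (p.1 - p.2)) :=
      (continuous_dil φ i).measurable.comp (by fun_prop)
    exact h1.mul (hfm.comp measurable_snd)
  exact this.integral_prod_right.measurable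

lemma lintegral_conv (φ : SchwartzMap ℝ ℂ) (i : ℤ) {f : ℝ → ℂ} (hfm : Measurable f) :
    ∫⁻ x, ‖conv (dilate φ i) f x‖ₑ ^ 2
      ≤ (∫⁻ x, ‖φ x‖ₑ) * (∫⁻ x, ‖φ x‖ₑ) * ∫⁻ y, ‖f y‖ₑ ^ 2 := by
  have hφm : Measurable (fun x => ‖φ x‖ₑ) := φ.continuous.measurable.enorm
  have h := schur (fun x y => ENNReal.ofReal ((2 : ℝ) ^ i) * ‖φ ((2 : ℝ) ^ i * (x - y))‖ₑ)
    (measurable_const.mul (hφm.comp (by fun_prop : Measurable fun p : ℝ × ℝ =>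
      (2 : ℝ) ^ i * (p.1 - p.2)))) (fun y => ‖f y‖ₑ) hfm.enorm _ _
    (fun x => (lintegral_dil i _ hφm x).le) (fun y => (lintegral_dil' i _ hφm y).le)
  refine le_trans (lintegral_mono fun x => ?_) h
  refine pow_le_pow_left₀ (by simp) ?_ 2
  refine (enorm_integral_le_lintegral_enorm _).trans (lintegral_mono fun y => ?_)
  simp only
  rw [enorm_mul, dil_enorm]

lemma lintegral_phi_lt (φ : SchwartzMap ℝ ℂ) : ∫⁻ x, ‖φ x‖ₑ < ⊤ := φ.integrable.2

lemma memLp_of_sq {f : ℝ → ℂ} (hfm : Measurable f) (h : ∫⁻ y, ‖f y‖ₑ ^ 2 < ⊤) : MemLp f 2 := by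
  refine ⟨hfm.aestronglyMeasurable, ?_⟩
  rw [eLpNorm_eq_lintegral_rpow_enorm_toReal (by simp) (by simp)]
  simp only [ENNReal.toReal_ofNat, ENNReal.rpow_two]
  exact ENNReal.rpow_lt_top_of_nonneg (by norm_num) h.ne

lemma eLpNorm_sq (f : ℝ → ℂ) : (eLpNorm f 2 volume) ^ (2 : ℝ) = ∫⁻ y, ‖f y‖ₑ ^ 2 := by
  rw [eLpNorm_eq_lintegral_rpow_enorm_toReal (by simp) (by simp), ← ENNReal.rpow_mul]
  simp

lemma memLp_conv (φ : SchwartzMap ℝ ℂ) (i : ℤ) {f : ℝ → ℂ} (hfm : Measurable f)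
    (hf : MemLp f 2) : MemLp (conv (dilate φ i) f) 2 := by
  refine memLp_of_sq (measurable_conv φ i hfm) ((lintegral_conv φ i hfm).trans_lt ?_)
  have h := lintegral_phi_lt φ
  refine ENNReal.mul_lt_top (ENNReal.mul_lt_top h h) ?_
  rw [← eLpNorm_sq]
  exact ENNReal.rpow_lt_top_of_nonneg (by norm_num) hf.2.ne

/-! Averages over dyadic cells. -/

def cell (n k : ℤ) : Set ℝ := {z | dy n z = k}

lemma cell_eq (n k : ℤ) :
    cell n k = Set.Ico ((k : ℝ) * (2 : ℝ) ^ (-n)) (((k : ℝ) + 1) * (2 : ℝ) ^ (-n)) := by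
  ext z
  simp only [cell, dy, Set.mem_ofPred_eq, Set.mem_Ico, Int.floor_eq_iff]
  have h := two_zpow_pos n
  rw [zpow_neg, ← div_eq_mul_inv, ← div_eq_mul_inv, div_le_iff₀ h, lt_div_iff₀ h,
    mul_comm z]

lemma measurableSet_cell (n k : ℤ) : MeasurableSet (cell n k) := by
  rw [cell_eq]; exact measurableSet_Ico

lemma volume_cell (n k : ℤ) : volume (cell n k) = ENNReal.ofReal ((2 : ℝ) ^ (-n)) := by
  rw [cell_eq, Real.volume_Ico]; congr 1; ring

def avg (n : ℤ) (F : ℝ → ℂ) (x : ℝ) : ℂ := ((2 : ℝ) ^ n : ℝ) • ∫ z in cell n (dy n x), F z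

lemma lev_avg (n : ℤ) (F : ℝ → ℂ) : Lev n (avg n F) := by
  intro x y h; simp only [avg, h]

lemma integrableOn_cell {F : ℝ → ℂ} (hF : MemLp F 2) (n k : ℤ) : IntegrableOn F (cell n k) := by
  have h := (hF.locallyIntegrable (by norm_num)).integrableOn_isCompact
    (isCompact_Icc (a := (k : ℝ) * (2 : ℝ) ^ (-n)) (b := ((k : ℝ) + 1) * (2 : ℝ) ^ (-n)))
  rw [cell_eq]
  exact h.mono_set Set.Ico_subset_Icc_self

lemma avg_sum {ι : Type*} (s : Finset ι) (n : ℤ) (F : ι → ℝ → ℂ) (hF : ∀ i ∈ s, MemLp (F i) 2)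
    (x : ℝ) : avg n (fun z => ∑ i ∈ s, F i z) x = ∑ i ∈ s, avg n (F i) x := by
  simp only [avg]
  rw [integral_finsetSum _ (fun i hi => integrableOn_cell (hF i hi) n _), Finset.smul_sum]

lemma cell_split (n k : ℤ) : cell n k = cell (n + 1) (2 * k) ∪ cell (n + 1) (2 * k + 1) := by
  ext z
  simp only [cell, Set.mem_ofPred_eq, Set.mem_union]
  rw [dy_half n z]; omega

lemma avg_swap (n : ℤ) {F : ℝ → ℂ} (hF : MemLp F 2) (x : ℝ) :
    avg (n + 1) F (sw (n + 1) x) - avg n F x = -(avg (n + 1) F x - avg n F x) := by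
  have hk : ∫ z in cell n (dy n x), F z = (∫ z in cell (n + 1) (2 * dy n x), F z)
      + ∫ z in cell (n + 1) (2 * dy n x + 1), F z := by
    rw [cell_split, setIntegral_union _ (measurableSet_cell _ _) (integrableOn_cell hF _ _)
      (integrableOn_cell hF _ _)]
    rw [Set.disjoint_left]
    intro z h1 h2
    simp only [cell, Set.mem_ofPred_eq] at h1 h2
    omega
  have h2 : (2 : ℝ) ^ (n + 1) = 2 * 2 ^ n := by rw [zpow_add₀ (by norm_num)]; ring
  have hh := dy_half n x
  simp only [avg, dy_sw, hk, h2, mul_smul]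
  split_ifs with he
  · obtain ⟨r, hr⟩ := he
    have e1 : dy (n + 1) x = 2 * dy n x := by omega
    rw [e1]
    module
  · rw [Int.not_even_iff_odd] at he; obtain ⟨r, hr⟩ := he
    have e1 : dy (n + 1) x = 2 * dy n x + 1 := by omega
    rw [e1, add_sub_cancel_right]
    module

lemma mart_avg (a : ℤ) {F : ℝ → ℂ} (hF : MemLp F 2) : Mart a (fun t => avg (a + t) F) where
  lev t := lev_avg _ _
  swap t x := by
    have := avg_swap (a + t) hF x
    push_cast
    rw [← add_assoc]
    exact this



/-- Local Lipschitz estimate with decay. -/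
lemma schwartz_lip (φ : SchwartzMap ℝ ℂ) : ∃ C : ℝ, 0 < C ∧ ∀ u v : ℝ, |u - v| ≤ 1 →
    ‖φ u - φ v‖ ≤ |u - v| * (C * (1 + u ^ 2)⁻¹) := by
  obtain ⟨C0, h0, hC0⟩ := φ.decay 0 1
  obtain ⟨C2, h2, hC2⟩ := φ.decay 2 1
  refine ⟨3 * (C0 + C2), by positivity, fun u v huv => ?_⟩
  have hd : ∀ s ∈ Metric.closedBall u 1, ‖deriv φ s‖ ≤ 3 * (C0 + C2) * (1 + u ^ 2)⁻¹ := by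
    intro s hs
    have a0 := hC0 s
    have a2 := hC2 s
    rw [norm_iteratedFDeriv_eq_norm_iteratedDeriv, iteratedDeriv_one] at a0 a2
    simp only [pow_zero, one_mul, Real.norm_eq_abs, sq_abs] at a0 a2
    rw [Metric.mem_closedBall, Real.dist_eq] at hs
    rw [← div_eq_mul_inv, le_div_iff₀ (by positivity)]
    have : (s - u) ^ 2 ≤ 1 := by
      rw [← sq_abs]; exact pow_le_one₀ (abs_nonneg _) hs
    have hu : u ^ 2 ≤ 2 * s ^ 2 + 2 := by nlinarith [sq_nonneg (2 * s - u), sq_nonneg (s + (s-u))]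
    have hn := norm_nonneg (deriv φ s)
    nlinarith [mul_le_mul_of_nonneg_left hu hn]
  have h := (convex_closedBall u 1).norm_image_sub_le_of_norm_deriv_le (f := φ) (x := v) (y := u)
    (fun s _ => φ.differentiableAt) hd
    (by rw [Metric.mem_closedBall, Real.dist_eq, abs_sub_comm]; exact huv)
    (Metric.mem_closedBall_self (by norm_num))
  rw [mul_comm, ← Real.norm_eq_abs]; exact h

lemma psi_lt (C : ℝ) : ∫⁻ u : ℝ, ENNReal.ofReal (C * (1 + u ^ 2)⁻¹) < ⊤ := by
  have := (integrable_inv_one_add_sq.const_mul C)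
  exact this.lintegral_lt_top

lemma measurable_psi (C : ℝ) : Measurable (fun u : ℝ => ENNReal.ofReal (C * (1 + u ^ 2)⁻¹)) := by
  fun_prop

lemma cell_dist {n : ℤ} {x z : ℝ} (h : dy n z = dy n x) : |x - z| ≤ (2 : ℝ) ^ (-n) := by
  have h1 : x ∈ cell n (dy n x) := rfl
  have h2 : z ∈ cell n (dy n x) := h
  rw [cell_eq, Set.mem_Ico] at h1 h2
  rw [abs_le]
  constructor <;> nlinarith

lemma fine_est (φ : SchwartzMap ℝ ℂ) (C : ℝ) (hC : 0 < C)
    (hφ : ∀ u v : ℝ, |u - v| ≤ 1 → ‖φ u - φ v‖ ≤ |u - v| * (C * (1 + u ^ 2)⁻¹))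
    (i n : ℤ) (hin : i ≤ n) {f : ℝ → ℂ} (hfm : Measurable f) (hf : MemLp f 2) :
    ∫⁻ x, ‖conv (dilate φ i) f x - avg n (conv (dilate φ i) f) x‖ₑ ^ 2
      ≤ ENNReal.ofReal ((2 : ℝ) ^ (i - n)) * ((∫⁻ u : ℝ, ENNReal.ofReal (C * (1 + u ^ 2)⁻¹))
        * (∫⁻ u : ℝ, ENNReal.ofReal (C * (1 + u ^ 2)⁻¹))) * ∫⁻ y, ‖f y‖ₑ ^ 2 := by
  set c := ∫⁻ u : ℝ, ENNReal.ofReal (C * (1 + u ^ 2)⁻¹) with hc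
  set ψ : ℝ → ℝ≥0∞ := fun u : ℝ => ENNReal.ofReal (C * (1 + u ^ 2)⁻¹) with hψ
  set F := conv (dilate φ i) f with hF
  set q := (2 : ℝ) ^ (i - n) with hq
  have hq0 : 0 < q := two_zpow_pos _
  have hq1 : q ≤ 1 := zpow_le_one_of_nonpos₀ (by norm_num) (by omega)
  have hψm : Measurable ψ := measurable_psi C
  have hqq : (2 : ℝ) ^ i * (2 : ℝ) ^ (-n) = q := by
    rw [hq, ← zpow_add₀ (by norm_num)]; rfl
  set k : ℝ → ℝ → ℝ≥0∞ := fun x y =>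
    ENNReal.ofReal ((2 : ℝ) ^ i) * ψ ((2 : ℝ) ^ i * (x - y)) with hk
  have hdiff : ∀ x z, dy n z = dy n x →
      ‖F x - F z‖ₑ ≤ ENNReal.ofReal q * ∫⁻ y, k x y * ‖f y‖ₑ := by
    intro x z hz
    simp only [hF, conv]
    rw [← integral_sub (integrable_conv φ i hf x) (integrable_conv φ i hf z),
      ← lintegral_const_mul' _ _ ENNReal.ofReal_ne_top]
    refine (enorm_integral_le_lintegral_enorm _).trans (lintegral_mono fun y => ?_)
    simp only
    rw [← sub_mul, enorm_mul, ← mul_assoc]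
    refine mul_le_mul_left ?_ _
    have e : dilate φ i (x - y) - dilate φ i (z - y)
        = ((2 : ℝ) ^ i : ℝ) • (φ ((2 : ℝ) ^ i * (x - y)) - φ ((2 : ℝ) ^ i * (z - y))) := by
      simp only [dilate, smul_sub]
    have hd : |(2 : ℝ) ^ i * (x - y) - (2 : ℝ) ^ i * (z - y)| ≤ q := by
      have : (2 : ℝ) ^ i * (x - y) - (2 : ℝ) ^ i * (z - y) = (2 : ℝ) ^ i * (x - z) := by ring
      rw [this, abs_mul, abs_of_pos (two_zpow_pos i), ← hqq]
      exact mul_le_mul_of_nonneg_left (cell_dist hz) (two_zpow_pos i).le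
    rw [e, enorm_smul, Real.enorm_eq_ofReal (two_zpow_pos i).le, mul_left_comm]
    refine mul_le_mul_right ?_ _
    rw [← ofReal_norm, hψ, ← ENNReal.ofReal_mul hq0.le]
    refine ENNReal.ofReal_le_ofReal ((hφ _ _ (hd.trans hq1)).trans ?_)
    exact mul_le_mul_of_nonneg_right hd (by positivity)
  have hF2 : MemLp F 2 := memLp_conv φ i hfm hf
  have hpt : ∀ x, ‖F x - avg n F x‖ₑ ≤ ENNReal.ofReal q * ∫⁻ y, k x y * ‖f y‖ₑ := by
    intro x
    have hvol : volume.real (cell n (dy n x)) = (2 : ℝ) ^ (-n) := by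
      rw [Measure.real, volume_cell, ENNReal.toReal_ofReal (two_zpow_pos _).le]
    have e : F x - avg n F x = ((2 : ℝ) ^ n : ℝ) • ∫ z in cell n (dy n x), (F x - F z) := by
      have : IntegrableOn (fun _ : ℝ => F x) (cell n (dy n x)) :=
        integrableOn_const (by rw [volume_cell]; exact ENNReal.ofReal_ne_top)
      rw [integral_sub this (integrableOn_cell hF2 _ _), setIntegral_const, hvol, smul_sub,
        ← mul_smul, two_zpow_mul_neg, one_smul]
      rfl
    rw [e, enorm_smul, Real.enorm_eq_ofReal (two_zpow_pos n).le]
    have h1 : ‖∫ z in cell n (dy n x), (F x - F z)‖ₑ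
        ≤ (ENNReal.ofReal q * ∫⁻ y, k x y * ‖f y‖ₑ) * ENNReal.ofReal ((2 : ℝ) ^ (-n)) := by
      refine (enorm_integral_le_lintegral_enorm _).trans ?_
      rw [← volume_cell n (dy n x), ← setLIntegral_const]
      exact setLIntegral_mono' (measurableSet_cell _ _) fun z hz => hdiff x z hz
    refine (mul_le_mul_right h1 _).trans ?_
    rw [mul_left_comm, ofReal_two_mul_neg, mul_one]
  have hs := schur k (measurable_const.mul (hψm.comp (by fun_prop : Measurable fun p : ℝ × ℝ =>
      (2 : ℝ) ^ i * (p.1 - p.2)))) (fun y => ‖f y‖ₑ) hfm.enorm c c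
    (fun x => (lintegral_dil i _ hψm x).le) (fun y => (lintegral_dil' i _ hψm y).le)
  calc ∫⁻ x, ‖F x - avg n F x‖ₑ ^ 2
      ≤ ∫⁻ x, ENNReal.ofReal q ^ 2 * (∫⁻ y, k x y * ‖f y‖ₑ) ^ 2 := by
        refine lintegral_mono fun x => ?_
        rw [← mul_pow]
        exact pow_le_pow_left₀ (by simp) (hpt x) 2
    _ = ENNReal.ofReal q ^ 2 * ∫⁻ x, (∫⁻ y, k x y * ‖f y‖ₑ) ^ 2 :=
        lintegral_const_mul' _ _ (by simp)
    _ ≤ ENNReal.ofReal q * (c * c * ∫⁻ y, ‖f y‖ₑ ^ 2) := by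
        refine mul_le_mul' ?_ hs
        rw [sq]
        refine (mul_le_mul_right (ENNReal.ofReal_le_one.2 hq1) _).trans (by simp)
    _ = _ := by ring

/-! Coarse averages. -/

def RR (φ : SchwartzMap ℝ ℂ) (p : ℝ) : ℝ≥0∞ :=
  ∫⁻ z, {z : ℝ | |p| ≤ |z|}.indicator (fun z => ‖φ z‖ₑ) z

lemma RR_uncurry_meas (φ : SchwartzMap ℝ ℂ) : Measurable (Function.uncurry fun p z : ℝ =>
    {z : ℝ | |p| ≤ |z|}.indicator (fun z => ‖φ z‖ₑ) z) := by
  have hφm : Measurable (fun x => ‖φ x‖ₑ) := φ.continuous.measurable.enorm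
  have hs : MeasurableSet {p : ℝ × ℝ | |p.1| ≤ |p.2|} :=
    measurableSet_le (by fun_prop) (by fun_prop)
  have := (hφm.comp measurable_snd : Measurable fun p : ℝ × ℝ => ‖φ p.2‖ₑ).indicator hs
  exact this

lemma measurable_RR (φ : SchwartzMap ℝ ℂ) : Measurable (RR φ) :=
  (RR_uncurry_meas φ).lintegral_prod_right'

lemma lintegral_RR (φ : SchwartzMap ℝ ℂ) : ∫⁻ p, RR φ p < ⊤ := by
  unfold RR
  rw [lintegral_lintegral_swap (RR_uncurry_meas φ).aemeasurable]
  have h : ∀ z : ℝ, ∫⁻ p : ℝ, {z : ℝ | |p| ≤ |z|}.indicator (fun z => ‖φ z‖ₑ) z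
      = 2 * ‖‖z‖ ^ 1 * ‖φ z‖‖ₑ := by
    intro z
    have : ∀ p : ℝ, {z : ℝ | |p| ≤ |z|}.indicator (fun z => ‖φ z‖ₑ) z
        = (Set.Icc (-|z|) |z|).indicator (fun _ => ‖φ z‖ₑ) p := by
      intro p
      by_cases hp : |p| ≤ |z|
      · rw [Set.indicator_of_mem (by exact hp), Set.indicator_of_mem (by exact abs_le.1 hp)]
      · rw [Set.indicator_of_notMem (by exact hp),
          Set.indicator_of_notMem (fun h => hp (abs_le.2 (Set.mem_Icc.1 h)))]
    simp_rw [this]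
    rw [lintegral_indicator measurableSet_Icc, setLIntegral_const, Real.volume_Icc, pow_one,
      enorm_mul, enorm_norm, enorm_norm, ← ofReal_norm z, Real.norm_eq_abs]
    have : |z| - -|z| = 2 * |z| := by ring
    rw [this, ENNReal.ofReal_mul (by norm_num), mul_comm]
    simp [mul_assoc]
  simp_rw [h]
  rw [lintegral_const_mul' _ _ (by simp)]
  exact ENNReal.mul_lt_top (by simp) (φ.integrable_pow_mul volume 1).2

lemma Iic_le_RR (φ : SchwartzMap ℝ ℂ) (h0 : ∫ x, φ x = 0) (p : ℝ) :
    ‖∫ z in Set.Iic p, φ z‖ₑ ≤ RR φ p := by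
  have hm : MeasurableSet {z : ℝ | |p| ≤ |z|} := measurableSet_le (by fun_prop) (by fun_prop)
  have gen : ∀ s : Set ℝ, (s ⊆ {z : ℝ | |p| ≤ |z|}) → ‖∫ z in s, φ z‖ₑ ≤ RR φ p := by
    intro s hs
    refine (enorm_integral_le_lintegral_enorm _).trans ?_
    unfold RR
    rw [lintegral_indicator hm]
    exact lintegral_mono_set hs
  rcases le_or_gt p 0 with hp | hp
  · apply gen
    intro z hz
    simp only [Set.mem_Iic] at hz
    simp only [Set.mem_ofPred_eq]
    rw [abs_of_nonpos hp, abs_of_nonpos (hz.trans hp)]; linarith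
  · have h := intervalIntegral.integral_Iic_add_Ioi (b := p) (μ := volume)
      φ.integrable.integrableOn φ.integrable.integrableOn
    rw [h0] at h
    rw [eq_neg_of_add_eq_zero_left h, enorm_neg]
    apply gen
    intro z hz
    simp only [Set.mem_Ioi] at hz
    simp only [Set.mem_ofPred_eq]
    rw [abs_of_pos hp, abs_of_pos (hp.trans hz)]; linarith

lemma cell_integral_dil (φ : SchwartzMap ℝ ℂ) (h0 : ∫ x, φ x = 0) (i n k : ℤ) (y : ℝ) :
    ‖∫ z in cell n k, dilate φ i (z - y)‖ₑ
      ≤ RR φ ((2 : ℝ) ^ i * ((k : ℝ) * (2 : ℝ) ^ (-n) - y))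
        + RR φ ((2 : ℝ) ^ i * (((k : ℝ) + 1) * (2 : ℝ) ^ (-n) - y)) := by
  set a := (k : ℝ) * (2 : ℝ) ^ (-n)
  set b := ((k : ℝ) + 1) * (2 : ℝ) ^ (-n)
  have hab : a ≤ b := by
    have := two_zpow_pos (-n)
    simp only [a, b]; nlinarith
  have e1 : ∫ z in cell n k, dilate φ i (z - y)
      = ∫ z in ((2 : ℝ) ^ i * (a - y))..((2 : ℝ) ^ i * (b - y)), φ z := by
    rw [cell_eq, integral_Ico_eq_integral_Ioc, ← intervalIntegral.integral_of_le hab, mul_sub,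
      mul_sub, ← intervalIntegral.smul_integral_comp_mul_sub, ← intervalIntegral.integral_smul]
    simp only [dilate, mul_sub]
  rw [e1, ← intervalIntegral.integral_Iic_sub_Iic φ.integrable.integrableOn
    φ.integrable.integrableOn, add_comm]
  exact (enorm_sub_le).trans (add_le_add (Iic_le_RR φ h0 _) (Iic_le_RR φ h0 _))

lemma lintegral_avg (n : ℤ) (h : ℝ → ℝ≥0∞) (hh : Measurable h) :
    ∫⁻ x, ENNReal.ofReal ((2 : ℝ) ^ n) * ∫⁻ z in cell n (dy n x), h z = ∫⁻ z, h z := by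
  have e : ∀ x, ∫⁻ z in cell n (dy n x), h z
      = ∫⁻ z, (cell n (dy n z)).indicator (fun _ => h z) x := by
    intro x
    rw [← lintegral_indicator (measurableSet_cell _ _)]
    refine lintegral_congr fun z => ?_
    by_cases hz : dy n z = dy n x
    · rw [Set.indicator_of_mem (by exact hz), Set.indicator_of_mem (by exact hz.symm)]
    · rw [Set.indicator_of_notMem (by exact hz), Set.indicator_of_notMem (fun h => hz h.symm)]
  simp_rw [e]
  rw [lintegral_const_mul' _ _ ENNReal.ofReal_ne_top, lintegral_lintegral_swap]
  · simp_rw [lintegral_indicator (measurableSet_cell _ _), setLIntegral_const, volume_cell]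
    rw [lintegral_mul_const' _ _ ENNReal.ofReal_ne_top, mul_left_comm, ofReal_two_mul_neg, mul_one]
  · have hs : MeasurableSet {p : ℝ × ℝ | dy n p.1 = dy n p.2} :=
      measurableSet_eq_fun ((measurable_dy n).comp measurable_fst)
        ((measurable_dy n).comp measurable_snd)
    have := (hh.comp measurable_snd : Measurable fun p : ℝ × ℝ => h p.2).indicator hs
    exact this.aemeasurable

lemma coarse_est (φ : SchwartzMap ℝ ℂ) (h0 : ∫ x, φ x = 0)
    (i n : ℤ) {f : ℝ → ℂ} (hfm : Measurable f) (hf : MemLp f 2) :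
    ∫⁻ x, ‖avg n (conv (dilate φ i) f) x‖ₑ ^ 2
      ≤ ENNReal.ofReal ((2 : ℝ) ^ (n - i)) * (2 * (∫⁻ p, RR φ p) * ∫⁻ x, ‖φ x‖ₑ)
        * ∫⁻ y, ‖f y‖ₑ ^ 2 := by
  have hφm : Measurable (fun x => ‖φ x‖ₑ) := φ.continuous.measurable.enorm
  set G : ℤ → ℝ → ℂ := fun k y => ((2 : ℝ) ^ n : ℝ) • ∫ z in cell n k, dilate φ i (z - y) with hG
  have hdm : Measurable (fun p : ℝ × ℝ => dilate φ i (p.2 - p.1)) :=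
    (continuous_dil φ i).measurable.comp (by fun_prop)
  have hGm : ∀ k, Measurable (G k) := by
    intro k
    have : StronglyMeasurable (Function.uncurry fun y z => dilate φ i (z - y)) :=
      hdm.stronglyMeasurable
    exact (this.integral_prod_right (ν := volume.restrict (cell n k))).measurable.const_smul
      ((2 : ℝ) ^ n)
  set k : ℝ → ℝ → ℝ≥0∞ := fun x y => ‖G (dy n x) y‖ₑ with hk
  have hkm : Measurable (Function.uncurry k) := by
    have h1 : Measurable (fun p : ℤ × ℝ => G p.1 p.2) := measurable_from_prod_countable_right hGm
    have h2 : Measurable (fun p : ℝ × ℝ => (dy n p.1, p.2)) :=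
      ((measurable_dy n).comp measurable_fst).prodMk measurable_snd
    exact (h1.comp h2).enorm
  have hswap : ∀ x, avg n (conv (dilate φ i) f) x = ∫ y, G (dy n x) y * f y := by
    intro x
    simp only [avg, conv]
    rw [integral_integral_swap]
    · rw [← integral_smul]
      congr 1; ext y
      simp only [hG]
      rw [integral_mul_const, smul_mul_assoc]
    · have hm : Measurable (Function.uncurry fun z y => dilate φ i (z - y) * f y) := by
        have h1 : Measurable (fun p : ℝ × ℝ => dilate φ i (p.1 - p.2)) :=
          (continuous_dil φ i).measurable.comp (by fun_prop)
        exact h1.mul (hfm.comp measurable_snd)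
      refine ⟨hm.aestronglyMeasurable, ?_⟩
      rw [HasFiniteIntegral, lintegral_prod _ hm.enorm.aemeasurable]
      -- inner integral is an L^2 function of z
      set H : ℝ → ℝ≥0∞ := fun z => ∫⁻ y, ‖dilate φ i (z - y) * f y‖ₑ with hH
      have hHm : Measurable H := hm.enorm.lintegral_prod_right'
      have hH2 : ∫⁻ z, H z ^ 2 < ⊤ := by
        have hs := schur (fun x y => ENNReal.ofReal ((2 : ℝ) ^ i) * ‖φ ((2 : ℝ) ^ i * (x - y))‖ₑ)
          (measurable_const.mul (hφm.comp (by fun_prop : Measurable fun p : ℝ × ℝ =>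
            (2 : ℝ) ^ i * (p.1 - p.2)))) (fun y => ‖f y‖ₑ) hfm.enorm _ _
          (fun x => (lintegral_dil i _ hφm x).le) (fun y => (lintegral_dil' i _ hφm y).le)
        simp only [hH, enorm_mul, dil_enorm]
        refine hs.trans_lt ?_
        have h := lintegral_phi_lt φ
        refine ENNReal.mul_lt_top (ENNReal.mul_lt_top h h) ?_
        rw [← eLpNorm_sq]
        exact ENNReal.rpow_lt_top_of_nonneg (by norm_num) hf.2.ne
      have hle : ∀ a : ℝ≥0∞, a ≤ 1 + a ^ 2 := by
        intro a
        rcases le_total a 1 with h | h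
        · exact h.trans le_self_add
        · exact (le_self_pow₀ h (by norm_num)).trans le_add_self
      calc ∫⁻ z in cell n (dy n x), H z ≤ ∫⁻ z in cell n (dy n x), (1 + H z ^ 2) :=
            lintegral_mono fun z => hle _
        _ = volume (cell n (dy n x)) + ∫⁻ z in cell n (dy n x), H z ^ 2 := by
            rw [lintegral_add_left measurable_const]; simp
        _ < ⊤ := by
            refine ENNReal.add_lt_top.2 ⟨by rw [volume_cell]; exact ENNReal.ofReal_lt_top, ?_⟩
            exact (setLIntegral_le_lintegral _ _).trans_lt hH2
  have hA : ∀ x, ∫⁻ y, k x y ≤ ENNReal.ofReal ((2 : ℝ) ^ (n - i)) * (2 * ∫⁻ p, RR φ p) := by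
    intro x
    have hRs : ∀ a : ℝ, ∫⁻ y, RR φ ((2 : ℝ) ^ i * (a - y))
        = ENNReal.ofReal ((2 : ℝ) ^ (-i)) * ∫⁻ p, RR φ p := by
      intro a
      rw [lintegral_sub_left_eq_self (fun y => RR φ ((2 : ℝ) ^ i * y)) a,
        lintegral_scale i _ (measurable_RR φ)]
    calc ∫⁻ y, k x y ≤ ∫⁻ y, ENNReal.ofReal ((2 : ℝ) ^ n)
          * (RR φ ((2 : ℝ) ^ i * ((dy n x : ℝ) * (2 : ℝ) ^ (-n) - y))
            + RR φ ((2 : ℝ) ^ i * (((dy n x : ℝ) + 1) * (2 : ℝ) ^ (-n) - y))) := by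
          refine lintegral_mono fun y => ?_
          simp only [hk, hG]
          rw [enorm_smul, Real.enorm_eq_ofReal (two_zpow_pos n).le]
          exact mul_le_mul_right (cell_integral_dil φ h0 i n _ y) _
      _ = _ := by
          rw [lintegral_const_mul' _ _ ENNReal.ofReal_ne_top, lintegral_add_left, hRs, hRs,
            ← two_mul, mul_left_comm 2, ← mul_assoc, ← ENNReal.ofReal_mul (two_zpow_pos n).le,
            ← zpow_add₀ (by norm_num)]
          · rfl
          · exact (measurable_RR φ).comp (by fun_prop)
  have hB : ∀ y, ∫⁻ x, k x y ≤ ∫⁻ x, ‖φ x‖ₑ := by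
    intro y
    have hdy : Measurable (fun z => ‖dilate φ i (z - y)‖ₑ) :=
      ((continuous_dil φ i).measurable.comp (by fun_prop)).enorm
    have h1 := lintegral_avg n _ hdy
    have h2 : ∫⁻ z, ‖dilate φ i (z - y)‖ₑ = ∫⁻ x, ‖φ x‖ₑ := by
      simp_rw [dil_enorm]
      exact lintegral_dil' i _ hφm y
    rw [← h2, ← h1]
    refine lintegral_mono fun x => ?_
    simp only [hk, hG]
    rw [enorm_smul, Real.enorm_eq_ofReal (two_zpow_pos n).le]
    exact mul_le_mul_right (enorm_integral_le_lintegral_enorm _) _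
  have hs := schur k hkm (fun y => ‖f y‖ₑ) hfm.enorm _ _ hA hB
  refine le_trans (lintegral_mono fun x => ?_) (hs.trans (le_of_eq (by ring)))
  refine pow_le_pow_left₀ (by simp) ?_ 2
  rw [hswap]
  refine (enorm_integral_le_lintegral_enorm _).trans (le_of_eq ?_)
  simp [hk, enorm_mul]



def geo (r : ℝ≥0) : ℝ≥0∞ := ∑' i : ℤ, ((r ^ i.natAbs : ℝ≥0) : ℝ≥0∞)

lemma geo_lt (r : ℝ≥0) (hr : r < 1) : geo r < ⊤ := by
  unfold geo
  rw [lt_top_iff_ne_top, ENNReal.tsum_coe_ne_top_iff_summable, ← NNReal.summable_coe]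
  have h1 : Summable (fun n : ℕ => (r : ℝ) ^ n) :=
    summable_geometric_of_lt_one r.2 (by exact_mod_cast hr)
  apply Summable.of_nat_of_neg
  · simpa using h1
  · simpa using h1

lemma geo_sum (r : ℝ≥0) (s : Finset ℤ) (n : ℤ) :
    ∑ i ∈ s, ((r ^ (i - n).natAbs : ℝ≥0) : ℝ≥0∞) ≤ geo r := by
  refine (ENNReal.sum_le_tsum s).trans (le_of_eq ?_)
  exact (Equiv.subRight n).tsum_eq (fun i : ℤ => ((r ^ i.natAbs : ℝ≥0) : ℝ≥0∞))

lemma half_pow (m : ℤ) (hm : m ≤ 0) :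
    ENNReal.ofReal ((2 : ℝ) ^ m) = (((1 / 2 : ℝ≥0) ^ m.natAbs : ℝ≥0) : ℝ≥0∞) := by
  obtain ⟨k, rfl⟩ : ∃ k : ℕ, m = -(k : ℤ) := ⟨m.natAbs, by omega⟩
  rw [Int.natAbs_neg, Int.natAbs_natCast, zpow_neg, zpow_natCast, ENNReal.ofReal,
    ENNReal.coe_inj]
  ext
  rw [Real.coe_toNNReal _ (by positivity)]
  push_cast
  rw [one_div, inv_pow]

def XX (φ : SchwartzMap ℝ ℂ) (n i : ℤ) (f : ℝ → ℂ) (x : ℝ) : ℂ :=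
  (if i ≤ n then conv (dilate φ i) f x else 0) - avg n (conv (dilate φ i) f) x

lemma XX_est (φ : SchwartzMap ℝ ℂ) (h0 : ∫ x, φ x = 0) : ∃ K : ℝ≥0∞, K < ⊤ ∧
    ∀ (f : ℝ → ℂ), Measurable f → MemLp f 2 →
      (∀ i, ∫⁻ x, ‖conv (dilate φ i) f x‖ₑ ^ 2 ≤ K * ∫⁻ y, ‖f y‖ₑ ^ 2) ∧
      ∀ n i, ∫⁻ x, ‖XX φ n i f x‖ₑ ^ 2
        ≤ (((1 / 2 : ℝ≥0) ^ (i - n).natAbs : ℝ≥0) : ℝ≥0∞) * (K * ∫⁻ y, ‖f y‖ₑ ^ 2) := by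
  obtain ⟨C, hC, hφ⟩ := schwartz_lip φ
  set c1 := ∫⁻ x, ‖φ x‖ₑ with hc1
  set c2 := ∫⁻ u : ℝ, ENNReal.ofReal (C * (1 + u ^ 2)⁻¹) with hc2
  set c3 := 2 * (∫⁻ p, RR φ p) * c1 with hc3
  have l1 : c1 < ⊤ := lintegral_phi_lt φ
  have l2 : c2 < ⊤ := psi_lt C
  have l3 : c3 < ⊤ := ENNReal.mul_lt_top (ENNReal.mul_lt_top (by simp) (lintegral_RR φ)) l1
  refine ⟨c1 * c1 + c2 * c2 + c3, ?_, fun f hfm hf => ⟨fun i => ?_, fun n i => ?_⟩⟩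
  · exact ENNReal.add_lt_top.2 ⟨ENNReal.add_lt_top.2 ⟨ENNReal.mul_lt_top l1 l1,
      ENNReal.mul_lt_top l2 l2⟩, l3⟩
  · refine (lintegral_conv φ i hfm).trans (mul_le_mul_left ?_ _)
    rw [add_assoc]; exact le_self_add
  · unfold XX
    by_cases hin : i ≤ n
    · simp only [if_pos hin]
      rw [← half_pow (i - n) (by omega), ← mul_assoc]
      refine (fine_est φ C hC hφ i n hin hfm hf).trans ?_
      refine mul_le_mul_left (mul_le_mul_right ?_ _) _
      rw [add_comm (c1 * c1), add_assoc]; exact le_self_add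
    · simp only [if_neg hin, zero_sub, enorm_neg]
      rw [← Int.natAbs_neg, neg_sub, ← half_pow (n - i) (by omega), ← mul_assoc]
      refine (coarse_est φ h0 i n hfm hf).trans ?_
      refine mul_le_mul_left (mul_le_mul_right ?_ _) _
      exact le_add_self

lemma weighted_cs (s : Finset ℤ) (w : ℤ → ℝ≥0) (hw : ∀ i, w i ≠ 0) (z : ℤ → ℂ) :
    ‖∑ i ∈ s, z i‖ₑ ^ 2 ≤ (∑ i ∈ s, (w i : ℝ≥0∞)) * ∑ i ∈ s, (((w i)⁻¹ : ℝ≥0) : ℝ≥0∞) * ‖z i‖ₑ ^ 2 := by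
  have h1 : (∑ i ∈ s, ‖z i‖₊) ^ 2 ≤ (∑ i ∈ s, w i) * ∑ i ∈ s, (w i)⁻¹ * ‖z i‖₊ ^ 2 := by
    refine Finset.sum_sq_le_sum_mul_sum_of_sq_le_mul s (fun _ _ => by simp) (fun _ _ => by simp) ?_
    intro i _
    rw [← mul_assoc, mul_inv_cancel₀ (hw i), one_mul]
  have h2 : ‖∑ i ∈ s, z i‖₊ ^ 2 ≤ (∑ i ∈ s, w i) * ∑ i ∈ s, (w i)⁻¹ * ‖z i‖₊ ^ 2 :=
    (pow_le_pow_left₀ (by simp) (nnnorm_sum_le _ _) 2).trans h1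
  simp only [enorm_eq_nnnorm]
  exact_mod_cast h2

def AA (φ : SchwartzMap ℝ ℂ) (f : ℤ → ℝ → ℂ) (a : ℤ) (t : ℕ) (x : ℝ) : ℂ :=
  ∑ i ∈ Finset.Ioc a (a + t), conv (dilate φ i) (f i) x

def MM (φ : SchwartzMap ℝ ℂ) (f : ℤ → ℝ → ℂ) (a : ℤ) (T t : ℕ) (x : ℝ) : ℂ :=
  avg (a + t) (AA φ f a T) x

lemma measurable_AA (φ : SchwartzMap ℝ ℂ) (f : ℤ → ℝ → ℂ) (a : ℤ) (t : ℕ)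
    (hfm : ∀ i, Measurable (f i)) : Measurable (AA φ f a t) := by
  unfold AA
  exact Finset.measurable_fun_sum _ fun i _ => measurable_conv φ i (hfm i)

lemma memLp_AA (φ : SchwartzMap ℝ ℂ) (f : ℤ → ℝ → ℂ) (a : ℤ) (t : ℕ)
    (hfm : ∀ i, Measurable (f i)) (hf : ∀ i, MemLp (f i) 2) : MemLp (AA φ f a t) 2 := by
  unfold AA
  exact memLp_finsetSum _ fun i _ => memLp_conv φ i (hfm i) (hf i)

lemma mart_MM (φ : SchwartzMap ℝ ℂ) (f : ℤ → ℝ → ℂ) (a : ℤ) (T : ℕ)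
    (hfm : ∀ i, Measurable (f i)) (hf : ∀ i, MemLp (f i) 2) : Mart a (MM φ f a T) :=
  mart_avg a (memLp_AA φ f a T hfm hf)

lemma err_eq (φ : SchwartzMap ℝ ℂ) (f : ℤ → ℝ → ℂ) (a : ℤ) (T t : ℕ) (ht : t ≤ T)
    (hfm : ∀ i, Measurable (f i)) (hf : ∀ i, MemLp (f i) 2) (x : ℝ) :
    AA φ f a t x - MM φ f a T t x = ∑ i ∈ Finset.Ioc a (a + T), XX φ (a + t) i (f i) x := by
  have h1 : MM φ f a T t x
      = ∑ i ∈ Finset.Ioc a (a + T), avg (a + t) (conv (dilate φ i) (f i)) x := by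
    unfold MM
    exact avg_sum _ _ _ (fun i _ => memLp_conv φ i (hfm i) (hf i)) x
  have h2 : AA φ f a t x = ∑ i ∈ Finset.Ioc a (a + T),
      if i ≤ a + t then conv (dilate φ i) (f i) x else 0 := by
    unfold AA
    rw [← Finset.sum_filter]
    refine Finset.sum_congr ?_ fun _ _ => rfl
    ext i; simp only [Finset.mem_Ioc, Finset.mem_filter]; omega
  rw [h1, h2, ← Finset.sum_sub_distrib]
  rfl

def QQ (f : ℤ → ℝ → ℂ) (a : ℤ) (T : ℕ) : ℝ≥0∞ := ∑ i ∈ Finset.Ioc a (a + T), ∫⁻ y, ‖f i y‖ₑ ^ 2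

lemma measurable_XX (φ : SchwartzMap ℝ ℂ) (n i : ℤ) (f : ℝ → ℂ) (hfm : Measurable f) :
    Measurable (XX φ n i f) := by
  unfold XX
  refine Measurable.sub ?_ (lev_avg n _).measurable
  split_ifs
  · exact measurable_conv φ i hfm
  · exact measurable_const

lemma err_sum (φ : SchwartzMap ℝ ℂ) (K : ℝ≥0∞) 
    (hK : ∀ (f : ℝ → ℂ), Measurable f → MemLp f 2 →
      ∀ n i, ∫⁻ x, ‖XX φ n i f x‖ₑ ^ 2
        ≤ (((1 / 2 : ℝ≥0) ^ (i - n).natAbs : ℝ≥0) : ℝ≥0∞) * (K * ∫⁻ y, ‖f y‖ₑ ^ 2))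
    (f : ℤ → ℝ → ℂ) (a : ℤ) (T : ℕ)
    (hfm : ∀ i, Measurable (f i)) (hf : ∀ i, MemLp (f i) 2) :
    ∑ t ∈ Finset.range (T + 1), ∫⁻ x, ‖AA φ f a t x - MM φ f a T t x‖ₑ ^ 2
      ≤ (geo (3 / 4) * geo (2 / 3) * K) * QQ f a T := by
  set I := Finset.Ioc a (a + (T : ℤ)) with hI
  have step : ∀ t ∈ Finset.range (T + 1), ∫⁻ x, ‖AA φ f a t x - MM φ f a T t x‖ₑ ^ 2
      ≤ geo (3 / 4) * ∑ i ∈ I, (((2 / 3 : ℝ≥0) ^ (i - (a + t)).natAbs : ℝ≥0) : ℝ≥0∞)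
          * (K * ∫⁻ y, ‖f i y‖ₑ ^ 2) := by
    intro t ht
    have ht : t ≤ T := by simp at ht; omega
    set w : ℤ → ℝ≥0 := fun i => (3 / 4) ^ (i - (a + t)).natAbs with hw
    calc ∫⁻ x, ‖AA φ f a t x - MM φ f a T t x‖ₑ ^ 2
        ≤ ∫⁻ x, geo (3 / 4) * ∑ i ∈ I, (((w i)⁻¹ : ℝ≥0) : ℝ≥0∞)
            * ‖XX φ (a + t) i (f i) x‖ₑ ^ 2 := by
          refine lintegral_mono fun x => ?_
          rw [err_eq φ f a T t ht hfm hf]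
          refine (weighted_cs I w (fun i => by positivity) _).trans ?_
          exact mul_le_mul_left (geo_sum _ _ _) _
      _ = geo (3 / 4) * ∑ i ∈ I, (((w i)⁻¹ : ℝ≥0) : ℝ≥0∞)
            * ∫⁻ x, ‖XX φ (a + t) i (f i) x‖ₑ ^ 2 := by
          rw [lintegral_const_mul' _ _ (geo_lt _ (by
            rw [div_lt_one (by norm_num)]; norm_num)).ne, lintegral_finsetSum]
          · congr 1
            refine Finset.sum_congr rfl fun i _ => ?_
            rw [lintegral_const_mul' _ _ ENNReal.coe_ne_top]
          · intro i _
            exact measurable_const.mul ((measurable_XX φ _ i _ (hfm i)).enorm.pow_const 2)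
      _ ≤ _ := by
          refine mul_le_mul_right (Finset.sum_le_sum fun i _ => ?_) _
          refine (mul_le_mul_right (hK (f i) (hfm i) (hf i) (a + t) i) _).trans (le_of_eq ?_)
          rw [← mul_assoc, ← ENNReal.coe_mul]
          congr 2
          simp only [hw]
          rw [← inv_pow, ← mul_pow]
          congr 1
          rw [inv_div, div_mul_div_comm, div_eq_div_iff (by norm_num) (by norm_num)]
          norm_num
  refine (Finset.sum_le_sum step).trans ?_
  rw [← Finset.mul_sum, Finset.sum_comm, QQ, Finset.mul_sum, Finset.mul_sum]
  refine Finset.sum_le_sum fun i _ => ?_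
  rw [← Finset.sum_mul]
  have hg : ∑ t ∈ Finset.range (T + 1), (((2 / 3 : ℝ≥0) ^ (i - (a + (t : ℤ))).natAbs : ℝ≥0) : ℝ≥0∞)
      ≤ geo (2 / 3) := by
    have := geo_sum (2 / 3) ((Finset.range (T + 1)).image (fun t : ℕ => a + (t : ℤ))) i
    rw [Finset.sum_image (fun x _ y _ h => by simpa using h)] at this
    refine le_trans (le_of_eq (Finset.sum_congr rfl fun t _ => ?_)) this
    rw [← Int.natAbs_neg, neg_sub]
  calc _ ≤ geo (3 / 4) * (geo (2 / 3) * (K * ∫⁻ y, ‖f i y‖ₑ ^ 2)) := by gcongr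
    _ = _ := by ring

lemma AA_succ (φ : SchwartzMap ℝ ℂ) (f : ℤ → ℝ → ℂ) (a : ℤ) (t : ℕ) (x : ℝ) :
    AA φ f a (t + 1) x = AA φ f a t x + conv (dilate φ (a + t + 1)) (f (a + t + 1)) x := by
  unfold AA
  have : Finset.Ioc a (a + ((t + 1 : ℕ) : ℤ)) = insert (a + t + 1) (Finset.Ioc a (a + t)) := by
    ext i; simp only [Finset.mem_Ioc, Finset.mem_insert]; push_cast; omega
  rw [this, Finset.sum_insert (by simp), add_comm]

lemma sum_Ioc_range (h : ℤ → ℝ≥0∞) (a : ℤ) (T : ℕ) :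
    ∑ i ∈ Finset.Ioc a (a + T), h i = ∑ t ∈ Finset.range T, h (a + t + 1) := by
  induction T with
  | zero => simp
  | succ t ih =>
    have : Finset.Ioc a (a + ((t + 1 : ℕ) : ℤ)) = insert (a + t + 1) (Finset.Ioc a (a + t)) := by
      ext i; simp only [Finset.mem_Ioc, Finset.mem_insert]; push_cast; omega
    rw [this, Finset.sum_insert (by simp), add_comm, ih, Finset.sum_range_succ]

lemma incr_sum (φ : SchwartzMap ℝ ℂ) (K : ℝ≥0∞)
    (hK : ∀ (f : ℝ → ℂ), Measurable f → MemLp f 2 →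
      ∀ i, ∫⁻ x, ‖conv (dilate φ i) f x‖ₑ ^ 2 ≤ K * ∫⁻ y, ‖f y‖ₑ ^ 2)
    (f : ℤ → ℝ → ℂ) (a : ℤ) (T : ℕ)
    (hfm : ∀ i, Measurable (f i)) (hf : ∀ i, MemLp (f i) 2) :
    ∑ t ∈ Finset.range T, ∫⁻ x, ‖AA φ f a (t + 1) x - AA φ f a t x‖ₑ ^ 2 ≤ K * QQ f a T := by
  rw [QQ, sum_Ioc_range, Finset.mul_sum]
  refine Finset.sum_le_sum fun t _ => ?_
  simp_rw [AA_succ, add_sub_cancel_left]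
  exact hK _ (hfm _) (hf _) _

lemma sq_three (u v w : ℂ) : ‖u - v + w‖ₑ ^ 2 ≤ 3 * (‖u‖ₑ ^ 2 + ‖v‖ₑ ^ 2 + ‖w‖ₑ ^ 2) := by
  have h : ‖u - v + w‖₊ ^ 2 ≤ 3 * (‖u‖₊ ^ 2 + ‖v‖₊ ^ 2 + ‖w‖₊ ^ 2) := by
    rw [← NNReal.coe_le_coe]
    push_cast
    have h1 := norm_add_le (u - v) w
    have h2 := norm_sub_le u v
    have h3 : ‖u - v + w‖ ≤ ‖u‖ + ‖v‖ + ‖w‖ := by linarith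
    have h4 : ‖u - v + w‖ ^ 2 ≤ (‖u‖ + ‖v‖ + ‖w‖) ^ 2 := pow_le_pow_left₀ (norm_nonneg _) h3 2
    nlinarith [sq_nonneg (‖u‖ - ‖v‖), sq_nonneg (‖u‖ - ‖w‖), sq_nonneg (‖v‖ - ‖w‖)]
  simp only [enorm_eq_nnnorm]
  exact_mod_cast h

lemma mart_sum (φ : SchwartzMap ℝ ℂ) (K1 K2 : ℝ≥0∞) (f : ℤ → ℝ → ℂ) (a : ℤ) (T : ℕ)
    (hfm : ∀ i, Measurable (f i)) (hf : ∀ i, MemLp (f i) 2) (q : ℝ≥0∞)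
    (h1 : ∑ t ∈ Finset.range T, ∫⁻ x, ‖AA φ f a (t + 1) x - AA φ f a t x‖ₑ ^ 2 ≤ K1 * q)
    (h2 : ∑ t ∈ Finset.range (T + 1), ∫⁻ x, ‖AA φ f a t x - MM φ f a T t x‖ₑ ^ 2 ≤ K2 * q) :
    ∑ t ∈ Finset.range T, ∫⁻ x, ‖MM φ f a T (t + 1) x - MM φ f a T t x‖ₑ ^ 2
      ≤ 3 * (K1 + K2 + K2) * q := by
  have hA := fun t => measurable_AA φ f a t hfm
  have hM := fun t => ((mart_MM φ f a T hfm hf).lev t).measurable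
  have hstep : ∀ t ∈ Finset.range T, ∫⁻ x, ‖MM φ f a T (t + 1) x - MM φ f a T t x‖ₑ ^ 2
      ≤ 3 * ((∫⁻ x, ‖AA φ f a (t + 1) x - AA φ f a t x‖ₑ ^ 2)
        + (∫⁻ x, ‖AA φ f a (t + 1) x - MM φ f a T (t + 1) x‖ₑ ^ 2)
        + ∫⁻ x, ‖AA φ f a t x - MM φ f a T t x‖ₑ ^ 2) := by
    intro t _
    have m1 : Measurable fun x => ‖AA φ f a (t + 1) x - AA φ f a t x‖ₑ ^ 2 :=
      ((hA (t + 1)).sub (hA t)).enorm.pow_const 2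
    have m2 : Measurable fun x => ‖AA φ f a (t + 1) x - MM φ f a T (t + 1) x‖ₑ ^ 2 :=
      ((hA (t + 1)).sub (hM (t + 1))).enorm.pow_const 2
    have m3 : Measurable fun x => ‖AA φ f a (t + 1) x - AA φ f a t x‖ₑ ^ 2
        + ‖AA φ f a (t + 1) x - MM φ f a T (t + 1) x‖ₑ ^ 2 := m1.add m2
    rw [← lintegral_add_left m1, ← lintegral_add_left m3,
      ← lintegral_const_mul' _ _ (by simp)]
    refine lintegral_mono fun x => ?_
    refine le_trans (le_of_eq ?_) (sq_three _ _ _)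
    congr 2; ring
  refine (Finset.sum_le_sum hstep).trans ?_
  rw [← Finset.mul_sum, Finset.sum_add_distrib, Finset.sum_add_distrib, mul_assoc, add_mul, add_mul]
  refine mul_le_mul_right (add_le_add (add_le_add h1 ?_) ?_) _
  · refine le_trans ?_ h2
    rw [Finset.sum_range_succ']; exact le_self_add
  · refine le_trans ?_ h2
    rw [Finset.sum_range_succ]; exact le_self_add

/-- The dominating function. -/
def WW (φ : SchwartzMap ℝ ℂ) (f g : ℤ → ℝ → ℂ) (a : ℤ) (T : ℕ) (x : ℝ) : ℝ :=
  10 * ∑ j ∈ Finset.range T, (rs (fun s => MM φ f a T s x) (fun s => MM φ g a T s x) j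
    + ww (fun s => AA φ f a s x) (fun s => AA φ g a s x)
      (fun s => MM φ f a T s x) (fun s => MM φ g a T s x) j)

lemma ofReal_sq (z : ℂ) : ENNReal.ofReal (‖z‖ ^ 2) = ‖z‖ₑ ^ 2 := by
  rw [ENNReal.ofReal_pow (norm_nonneg _), ofReal_norm]

lemma measurable_WW (φ : SchwartzMap ℝ ℂ) (f g : ℤ → ℝ → ℂ) (a : ℤ) (T : ℕ)
    (hfm : ∀ i, Measurable (f i)) (hf : ∀ i, MemLp (f i) 2)
    (hgm : ∀ i, Measurable (g i)) (hg : ∀ i, MemLp (g i) 2) : Measurable (WW φ f g a T) := by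
  have hA := fun t => measurable_AA φ f a t hfm
  have hM := fun t => ((mart_MM φ f a T hfm hf).lev t).measurable
  have hA' := fun t => measurable_AA φ g a t hgm
  have hM' := fun t => ((mart_MM φ g a T hgm hg).lev t).measurable
  unfold WW
  refine measurable_const.mul (Finset.measurable_fun_sum _ fun j _ => ?_)
  refine (measurable_rs (mart_MM φ f a T hfm hf) (mart_MM φ g a T hgm hg) j).add ?_
  unfold ww
  exact ((((((hA j).sub (hM j)).norm.pow_const 2).add (((hA' j).sub (hM' j)).norm.pow_const 2)).add
    (((hA' (j+1)).sub (hM' (j+1))).norm.pow_const 2)).add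
    (((hA' (j+1)).sub (hA' j)).norm.pow_const 2)).add
    (((hM (j+1)).sub (hM j)).norm.pow_const 2)

lemma WW_bound (φ : SchwartzMap ℝ ℂ) (h0 : ∫ x, φ x = 0) : ∃ K : ℝ≥0∞, K < ⊤ ∧
    ∀ (f g : ℤ → ℝ → ℂ), (∀ i, Measurable (f i)) → (∀ i, MemLp (f i) 2) →
    (∀ i, Measurable (g i)) → (∀ i, MemLp (g i) 2) → ∀ (a : ℤ) (T : ℕ),
    ∫⁻ x, ENNReal.ofReal (WW φ f g a T x) ≤ K * (QQ f a T + QQ g a T) := by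
  obtain ⟨K1, hK1, hX⟩ := XX_est φ h0
  set K2 := geo (3 / 4) * geo (2 / 3) * K1 with hK2
  have lK2 : K2 < ⊤ := ENNReal.mul_lt_top (ENNReal.mul_lt_top
    (geo_lt _ (by rw [div_lt_one (by norm_num)]; norm_num))
    (geo_lt _ (by rw [div_lt_one (by norm_num)]; norm_num))) hK1
  set K3 := 3 * (K1 + K2 + K2) with hK3
  have lK3 : K3 < ⊤ := ENNReal.mul_lt_top (by simp)
    (ENNReal.add_lt_top.2 ⟨ENNReal.add_lt_top.2 ⟨hK1, lK2⟩, lK2⟩)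
  refine ⟨10 * (100 * (K3 + 2 * K3) + (K2 + K2 + K2 + K1 + K3)), ?_, ?_⟩
  · exact ENNReal.mul_lt_top (by simp) (ENNReal.add_lt_top.2 ⟨ENNReal.mul_lt_top (by simp)
      (ENNReal.add_lt_top.2 ⟨lK3, ENNReal.mul_lt_top (by simp) lK3⟩), ENNReal.add_lt_top.2
      ⟨ENNReal.add_lt_top.2 ⟨ENNReal.add_lt_top.2 ⟨ENNReal.add_lt_top.2 ⟨lK2, lK2⟩, lK2⟩, hK1⟩,
        lK3⟩⟩)
  intro f g hfm hf hgm hg a T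
  have hA := fun t => measurable_AA φ f a t hfm
  have hM := fun t => ((mart_MM φ f a T hfm hf).lev t).measurable
  have hA' := fun t => measurable_AA φ g a t hgm
  have hM' := fun t => ((mart_MM φ g a T hgm hg).lev t).measurable
  set qf := QQ f a T
  set qg := QQ g a T
  have Ef := err_sum φ K1 (fun f a b => (hX f a b).2) f a T hfm hf
  have Eg := err_sum φ K1 (fun f a b => (hX f a b).2) g a T hgm hg
  have If := incr_sum φ K1 (fun f a b => (hX f a b).1) f a T hfm hf
  have Ig := incr_sum φ K1 (fun f a b => (hX f a b).1) g a T hgm hg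
  have Mf := mart_sum φ K1 K2 f a T hfm hf qf If Ef
  have Mg := mart_sum φ K1 K2 g a T hgm hg qg Ig Eg
  have en := (le_self_add).trans (energy (mart_MM φ f a T hfm hf) (mart_MM φ g a T hgm hg) T)
  have hrsm := measurable_rs (mart_MM φ f a T hfm hf) (mart_MM φ g a T hgm hg)
  have m2 : ∀ t, Measurable fun x => ‖AA φ f a t x - MM φ f a T t x‖ₑ ^ 2 :=
    fun t => ((hA t).sub (hM t)).enorm.pow_const 2
  have m3 : ∀ t, Measurable fun x => ‖AA φ g a t x - MM φ g a T t x‖ₑ ^ 2 :=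
    fun t => ((hA' t).sub (hM' t)).enorm.pow_const 2
  have m4 : ∀ t, Measurable fun x => ‖AA φ g a (t + 1) x - AA φ g a t x‖ₑ ^ 2 :=
    fun t => ((hA' (t + 1)).sub (hA' t)).enorm.pow_const 2
  have m5 : ∀ t, Measurable fun x => ‖MM φ f a T (t + 1) x - MM φ f a T t x‖ₑ ^ 2 :=
    fun t => ((hM (t + 1)).sub (hM t)).enorm.pow_const 2
  have hR : ∑ t ∈ Finset.range T, ∫⁻ x, ENNReal.ofReal
      (1 / 100 * rs (fun s => MM φ f a T s x) (fun s => MM φ g a T s x) t)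
      ≤ K3 * qf + 2 * (K3 * qg) := by
    refine en.trans ?_
    calc _ ≤ ∑ t ∈ Finset.range T, ((∫⁻ x, ‖MM φ f a T (t + 1) x - MM φ f a T t x‖ₑ ^ 2)
          + 2 * ∫⁻ x, ‖MM φ g a T (t + 1) x - MM φ g a T t x‖ₑ ^ 2) := by
          refine Finset.sum_le_sum fun t _ => ?_
          rw [← lintegral_const_mul' _ _ (by simp),
            ← lintegral_add_left (m5 t)]
          refine lintegral_mono fun x => ?_
          simp only
          rw [ENNReal.ofReal_add (by positivity) (by positivity),
            ENNReal.ofReal_mul (by norm_num), ofReal_sq, ofReal_sq]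
          simp
      _ ≤ _ := by
          rw [Finset.sum_add_distrib, ← Finset.mul_sum]
          gcongr
  have hpt : ∀ x, ENNReal.ofReal (WW φ f g a T x) = 10 * ∑ t ∈ Finset.range T,
      (100 * ENNReal.ofReal
        (1 / 100 * rs (fun s => MM φ f a T s x) (fun s => MM φ g a T s x) t)
      + (‖AA φ f a t x - MM φ f a T t x‖ₑ ^ 2 + ‖AA φ g a t x - MM φ g a T t x‖ₑ ^ 2
        + ‖AA φ g a (t + 1) x - MM φ g a T (t + 1) x‖ₑ ^ 2
        + ‖AA φ g a (t + 1) x - AA φ g a t x‖ₑ ^ 2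
        + ‖MM φ f a T (t + 1) x - MM φ f a T t x‖ₑ ^ 2)) := by
    intro x
    unfold WW
    rw [ENNReal.ofReal_mul (by norm_num), ENNReal.ofReal_sum_of_nonneg
      (fun j _ => add_nonneg (rs_nonneg _ _ _) (ww_nonneg _ _ _ _ _))]
    congr 1
    · simp
    refine Finset.sum_congr rfl fun t _ => ?_
    rw [ENNReal.ofReal_add (rs_nonneg _ _ _) (ww_nonneg _ _ _ _ _)]
    congr 1
    · have : (100 : ℝ≥0∞) = ENNReal.ofReal 100 := by simp
      rw [this, ← ENNReal.ofReal_mul (by norm_num)]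
      congr 1; ring
    · unfold ww
      rw [ENNReal.ofReal_add (by positivity) (by positivity),
        ENNReal.ofReal_add (by positivity) (by positivity),
        ENNReal.ofReal_add (by positivity) (by positivity),
        ENNReal.ofReal_add (by positivity) (by positivity)]
      simp only [ofReal_sq]
  simp_rw [hpt]
  have m1 : ∀ t, Measurable fun x => (100 : ℝ≥0∞) * ENNReal.ofReal
        (1 / 100 * rs (fun s => MM φ f a T s x) (fun s => MM φ g a T s x) t) := fun t =>
    measurable_const.mul (measurable_const.mul (hrsm t)).ennreal_ofReal
  rw [lintegral_const_mul' _ _ (by simp), lintegral_finsetSum]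
  swap
  · intro t _
    exact (m1 t).add (((((m2 t).add (m3 t)).add (m3 (t + 1))).add (m4 t)).add (m5 t))
  have hsplit : ∀ t, ∫⁻ x, (100 * ENNReal.ofReal
        (1 / 100 * rs (fun s => MM φ f a T s x) (fun s => MM φ g a T s x) t)
      + (‖AA φ f a t x - MM φ f a T t x‖ₑ ^ 2 + ‖AA φ g a t x - MM φ g a T t x‖ₑ ^ 2
        + ‖AA φ g a (t + 1) x - MM φ g a T (t + 1) x‖ₑ ^ 2
        + ‖AA φ g a (t + 1) x - AA φ g a t x‖ₑ ^ 2
        + ‖MM φ f a T (t + 1) x - MM φ f a T t x‖ₑ ^ 2))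
      = 100 * (∫⁻ x, ENNReal.ofReal
        (1 / 100 * rs (fun s => MM φ f a T s x) (fun s => MM φ g a T s x) t))
      + ((∫⁻ x, ‖AA φ f a t x - MM φ f a T t x‖ₑ ^ 2)
        + (∫⁻ x, ‖AA φ g a t x - MM φ g a T t x‖ₑ ^ 2)
        + (∫⁻ x, ‖AA φ g a (t + 1) x - MM φ g a T (t + 1) x‖ₑ ^ 2)
        + (∫⁻ x, ‖AA φ g a (t + 1) x - AA φ g a t x‖ₑ ^ 2)
        + ∫⁻ x, ‖MM φ f a T (t + 1) x - MM φ f a T t x‖ₑ ^ 2) := by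
    intro t
    rw [lintegral_add_left (m1 t), lintegral_const_mul' _ _ (by simp),
      lintegral_add_right _ (m5 t), lintegral_add_right _ (m4 t),
      lintegral_add_right _ (m3 (t + 1)), lintegral_add_right _ (m3 t)]
  simp_rw [hsplit]
  have s1 : ∑ t ∈ Finset.range T, ∫⁻ x, ‖AA φ f a t x - MM φ f a T t x‖ₑ ^ 2 ≤ K2 * qf := by
    refine le_trans ?_ Ef
    rw [Finset.sum_range_succ]; exact le_self_add
  have s2 : ∑ t ∈ Finset.range T, ∫⁻ x, ‖AA φ g a t x - MM φ g a T t x‖ₑ ^ 2 ≤ K2 * qg := by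
    refine le_trans ?_ Eg
    rw [Finset.sum_range_succ]; exact le_self_add
  have s3 : ∑ t ∈ Finset.range T, ∫⁻ x, ‖AA φ g a (t + 1) x - MM φ g a T (t + 1) x‖ₑ ^ 2
      ≤ K2 * qg := by
    refine le_trans ?_ Eg
    rw [Finset.sum_range_succ']; exact le_self_add
  simp only [Finset.sum_add_distrib]
  rw [← Finset.mul_sum]
  calc _ ≤ 10 * (100 * (K3 * qf + 2 * (K3 * qg))
        + (K2 * qf + K2 * qg + K2 * qg + K1 * qg + K3 * qf)) := by gcongr
    _ ≤ 10 * (100 * (K3 * (qf + qg) + 2 * (K3 * (qf + qg)))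
        + (K2 * (qf + qg) + K2 * (qf + qg) + K2 * (qf + qg) + K1 * (qf + qg)
          + K3 * (qf + qg))) := by
        have b1 : qf ≤ qf + qg := le_self_add
        have b2 : qg ≤ qf + qg := le_add_self
        gcongr
    _ = _ := by ring



/-- The bilinear sum over a jump. -/
def SS (φ : SchwartzMap ℝ ℂ) (f g : ℤ → ℝ → ℂ) (m n : ℤ) (x : ℝ) : ℂ :=
  ∑ j ∈ Finset.Ioc m n, ∑ i ∈ Finset.Ioo m j,
    conv (dilate φ i) (f i) x * conv (dilate φ j) (g j) x

lemma AA_sub (φ : SchwartzMap ℝ ℂ) (f : ℤ → ℝ → ℂ) (a : ℤ) (m n : ℕ) (h : m ≤ n) (x : ℝ) :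
    AA φ f a n x - AA φ f a m x
      = ∑ i ∈ Finset.Ioo (a + m) (a + n + 1), conv (dilate φ i) (f i) x := by
  unfold AA
  rw [sub_eq_iff_eq_add, ← Finset.sum_union]
  · refine Finset.sum_congr ?_ fun _ _ => rfl
    ext i; simp only [Finset.mem_Ioc, Finset.mem_Ioo, Finset.mem_union]; omega
  · rw [Finset.disjoint_left]
    intro i; simp only [Finset.mem_Ioc, Finset.mem_Ioo]; omega

lemma PP_eq (φ : SchwartzMap ℝ ℂ) (f g : ℤ → ℝ → ℂ) (a : ℤ) (m n : ℕ) (h : m ≤ n) (x : ℝ) :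
    PP (fun s => AA φ f a s x) (fun s => AA φ g a s x) m n = SS φ f g (a + m) (a + n) x := by
  induction n, h using Nat.le_induction with
  | base => simp [PP, SS]
  | succ n h ih =>
    have e : Finset.Ioc (a + m) (a + ((n + 1 : ℕ) : ℤ))
        = insert (a + n + 1) (Finset.Ioc (a + m) (a + n)) := by
      ext i; simp only [Finset.mem_Ioc, Finset.mem_insert]; push_cast; omega
    unfold PP SS at *
    rw [Finset.sum_Ico_succ_top h, ih, e, Finset.sum_insert (by simp), add_comm,
      AA_sub φ f a m n h]
    simp only
    rw [AA_succ, add_sub_cancel_left, Finset.sum_mul]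

lemma card_le_WW (φ : SchwartzMap ℝ ℂ) (f g : ℤ → ℝ → ℂ) (N : ℕ → ℤ) (hN : Monotone N)
    (x : ℝ) (S : Finset ℕ) (L : ℕ)
    (hS : ∀ k ∈ S, 1 < ‖SS φ f g (N k) (N (k + 1)) x‖)
    (hL : ∀ k ∈ S, -(L : ℤ) ≤ N k ∧ N (k + 1) ≤ L) :
    (S.card : ℝ) ≤ WW φ f g (-(L : ℤ)) (2 * L) x := by
  unfold WW
  refine count_le _ _ _ _ (2 * L) (fun k => (N k + L).toNat) ?_ S ?_
  · intro k l hkl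
    have := hN hkl
    simp only; omega
  · intro k hk
    obtain ⟨h1, h2⟩ := hL k hk
    have h3 := hN (Nat.le_succ k)
    simp only [Nat.succ_eq_add_one] at h3
    refine ⟨by omega, ?_⟩
    rw [PP_eq φ f g _ _ _ (by omega)]
    have e1 : -(L : ℤ) + (((N k + L).toNat : ℕ) : ℤ) = N k := by omega
    have e2 : -(L : ℤ) + (((N (k + 1) + L).toNat : ℕ) : ℤ) = N (k + 1) := by omega
    rw [e1, e2]
    exact hS k hk

lemma card_le_liminf (φ : SchwartzMap ℝ ℂ) (f g : ℤ → ℝ → ℂ) (N : ℕ → ℤ) (hN : Monotone N)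
    (x : ℝ) (S : Finset ℕ)
    (hS : ∀ k ∈ S, 1 < ‖SS φ f g (N k) (N (k + 1)) x‖) :
    (S.card : ℝ≥0∞) ≤ Filter.liminf
      (fun L : ℕ => ENNReal.ofReal (WW φ f g (-(L : ℤ)) (2 * L) x)) Filter.atTop := by
  refine Filter.le_liminf_of_le (by isBoundedDefault) ?_
  have : ∃ L0 : ℕ, ∀ k ∈ S, -(L0 : ℤ) ≤ N k ∧ N (k + 1) ≤ L0 := by
    refine ⟨∑ k ∈ S, ((N k).natAbs + (N (k + 1)).natAbs), fun k hk => ?_⟩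
    have := Finset.single_le_sum (f := fun k => (N k).natAbs + (N (k + 1)).natAbs)
      (fun _ _ => Nat.zero_le _) hk
    omega
  obtain ⟨L0, h0⟩ := this
  filter_upwards [Filter.eventually_ge_atTop L0] with L hL
  rw [← ENNReal.ofReal_natCast]
  refine ENNReal.ofReal_le_ofReal (card_le_WW φ f g N hN x S L hS fun k hk => ?_)
  have := h0 k hk
  omega

lemma encard_le (s : Set ℕ) (c : ℝ≥0∞) (h : ∀ S : Finset ℕ, ↑S ⊆ s → (S.card : ℝ≥0∞) ≤ c) :
    ((s.encard : ℕ∞) : ℝ≥0∞) ≤ c := by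
  by_cases hs : s.Finite
  · have := h hs.toFinset (by simp)
    rw [hs.encard_eq_coe_toFinset_card]
    simpa using this
  · have : c = ⊤ := by
      by_contra hc
      obtain ⟨n, hn⟩ := ENNReal.exists_nat_gt hc
      obtain ⟨S, hS, hc⟩ := Set.Infinite.exists_subset_card_eq hs n
      have := h S hS
      rw [hc] at this
      exact absurd hn (not_lt.2 this)
    rw [this]; exact le_top

lemma main_one (φ : SchwartzMap ℝ ℂ) (h0 : ∫ x, φ x = 0) : ∃ K : ℝ≥0∞, K < ⊤ ∧
    ∀ (f g : ℤ → ℝ → ℂ), (∀ i, Measurable (f i)) → (∀ i, MemLp (f i) 2) →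
    (∀ i, Measurable (g i)) → (∀ i, MemLp (g i) 2) → ∀ (Nk : ℕ → ℝ → ℤ),
    (∀ k x, Nk k x ≤ Nk (k + 1) x) →
    ∫⁻ x, (({k : ℕ | 1 < ‖SS φ f g (Nk k x) (Nk (k + 1) x) x‖}.encard : ℕ∞) : ℝ≥0∞)
      ≤ K * ((∑' i, eLpNorm (f i) 2 volume ^ (2 : ℝ)) + ∑' i, eLpNorm (g i) 2 volume ^ (2 : ℝ)) := by
  obtain ⟨K, hK, hW⟩ := WW_bound φ h0
  refine ⟨K, hK, fun f g hfm hf hgm hg Nk hN => ?_⟩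
  have hQ : ∀ (f : ℤ → ℝ → ℂ) a T, QQ f a T ≤ ∑' i, eLpNorm (f i) 2 volume ^ (2 : ℝ) := by
    intro f a T
    simp_rw [eLpNorm_sq]
    exact ENNReal.sum_le_tsum _
  calc _ ≤ ∫⁻ x, Filter.liminf
        (fun L : ℕ => ENNReal.ofReal (WW φ f g (-(L : ℤ)) (2 * L) x)) Filter.atTop := by
        refine lintegral_mono fun x => encard_le _ _ fun S hS => ?_
        exact card_le_liminf φ f g (fun k => Nk k x) (monotone_nat_of_le_succ fun k => hN k x)
          x S fun k hk => hS hk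
    _ ≤ Filter.liminf (fun L : ℕ => ∫⁻ x, ENNReal.ofReal (WW φ f g (-(L : ℤ)) (2 * L) x))
        Filter.atTop :=
      lintegral_liminf_le fun L => (measurable_WW φ f g _ _ hfm hf hgm hg).ennreal_ofReal
    _ ≤ _ := by
      refine Filter.liminf_le_of_le (by isBoundedDefault) fun b hb => ?_
      obtain ⟨L, hL⟩ := hb.exists
      refine hL.trans ((hW f g hfm hf hgm hg _ _).trans ?_)
      exact mul_le_mul_right (add_le_add (hQ f _ _) (hQ g _ _)) _

lemma conv_congr (ψ : ℝ → ℂ) (u v : ℝ → ℂ) (h : u =ᵐ[volume] v) (x : ℝ) :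
    conv ψ u x = conv ψ v x := by
  unfold conv
  refine integral_congr_ae ?_
  filter_upwards [h] with y hy
  rw [hy]

lemma conv_smul (ψ : ℝ → ℂ) (u : ℝ → ℂ) (c : ℂ) (x : ℝ) :
    conv ψ (fun y => c * u y) x = c * conv ψ u x := by
  unfold conv
  rw [← integral_const_mul]
  refine integral_congr_ae (Filter.Eventually.of_forall fun y => ?_)
  simp only; ring

lemma integral_zero (Nb : ℝ) (φ : SchwartzMap ℝ ℂ)
    (hφ : ∀ ξ : ℝ, 𝓕 (⇑φ) ξ ≠ 0 → (2 : ℝ) ^ (-Nb) < |ξ| ∧ |ξ| < (2 : ℝ) ^ Nb) :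
    ∫ x, φ x = 0 := by
  by_contra h
  have := (hφ 0 (by rw [Real.fourier_eq]; simpa using h)).1
  rw [abs_zero] at this
  exact absurd this (not_lt.2 (Real.rpow_nonneg (by norm_num) _))

lemma zero_ae (f : ℤ → ℝ → ℂ) (hf : ∀ i, MemLp (f i) 2)
    (h : (∑' i, eLpNorm (f i) 2 volume ^ (2 : ℝ)) = 0) (i : ℤ) : f i =ᵐ[volume] 0 := by
  rw [ENNReal.tsum_eq_zero] at h
  have h1 := h i
  rw [ENNReal.rpow_eq_zero_iff_of_pos (by norm_num)] at h1
  exact (eLpNorm_eq_zero_iff (hf i).1 (by norm_num)).1 h1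

lemma conv_zero (ψ u : ℝ → ℂ) (h : u =ᵐ[volume] 0) (x : ℝ) : conv ψ u x = 0 := by
  rw [conv_congr ψ u 0 h]; simp [conv]

lemma sum_scale (f : ℤ → ℝ → ℂ) (c : ℝ) (hc : 0 ≤ c) :
    (∑' i, eLpNorm (fun y => (c : ℂ) * f i y) 2 volume ^ (2 : ℝ))
      = ENNReal.ofReal (c ^ 2) * ∑' i, eLpNorm (f i) 2 volume ^ (2 : ℝ) := by
  rw [← ENNReal.tsum_mul_left]
  congr 1; ext i
  have : (fun y => (c : ℂ) * f i y) = (c : ℂ) • f i := by ext; simp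
  rw [this, eLpNorm_const_smul, ENNReal.mul_rpow_of_nonneg _ _ (by norm_num)]
  congr 1
  rw [ENNReal.rpow_two, ← ofReal_sq]
  simp

lemma final (Nb : ℝ) (φ : SchwartzMap ℝ ℂ)
    (hφ : ∀ ξ : ℝ, 𝓕 (⇑φ) ξ ≠ 0 → (2 : ℝ) ^ (-Nb) < |ξ| ∧ |ξ| < (2 : ℝ) ^ Nb) :
    ∃ C : ℝ≥0, 0 < C ∧
      ∀ (f g : ℤ → ℝ → ℂ),
      (∀ i, MemLp (f i) 2) → (∀ j, MemLp (g j) 2) →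
      (∑' i : ℤ, (eLpNorm (f i) 2 volume) ^ (2 : ℝ)) < ⊤ →
      (∑' j : ℤ, (eLpNorm (g j) 2 volume) ^ (2 : ℝ)) < ⊤ →
      ∀ (Nk : ℕ → ℝ → ℤ), IsJumpCollection Nk →
      ∀ lam : ℝ, 0 < lam →
      (∫⁻ x : ℝ, (({k : ℕ | lam < ‖SS φ f g (Nk k x) (Nk (k + 1) x) x‖}.encard : ℕ∞) : ℝ≥0∞))
        ≤ (C : ℝ≥0∞) * (ENNReal.ofReal lam)⁻¹ *
            (∑' i : ℤ, (eLpNorm (f i) 2 volume) ^ (2 : ℝ)) ^ ((1 : ℝ) / 2) *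
            (∑' j : ℤ, (eLpNorm (g j) 2 volume) ^ (2 : ℝ)) ^ ((1 : ℝ) / 2) := by
  obtain ⟨K, hK, hmain⟩ := main_one φ (integral_zero Nb φ hφ)
  refine ⟨2 * K.toNNReal + 1, by positivity, ?_⟩
  intro f g hf hg hfs hgs Nk hN lam hlam
  have key : (∑' i : ℤ, (eLpNorm (f i) 2 volume) ^ (2 : ℝ)) = 0 ∨
      (∑' i : ℤ, (eLpNorm (g i) 2 volume) ^ (2 : ℝ)) = 0 →
      (∫⁻ x : ℝ, (({k : ℕ | lam < ‖SS φ f g (Nk k x) (Nk (k + 1) x) x‖}.encard : ℕ∞) : ℝ≥0∞)) = 0 := by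
    intro h
    have : ∀ m n x, SS φ f g m n x = 0 := by
      intro m n x
      unfold SS
      refine Finset.sum_eq_zero fun j _ => Finset.sum_eq_zero fun i _ => ?_
      rcases h with h | h
      · rw [conv_zero _ _ (zero_ae f hf h i), zero_mul]
      · rw [conv_zero _ _ (zero_ae g hg h j), mul_zero]
    simp [this, not_lt.2 hlam.le]
  by_cases hz : (∑' i : ℤ, (eLpNorm (f i) 2 volume) ^ (2 : ℝ)) = 0 ∨
      (∑' i : ℤ, (eLpNorm (g i) 2 volume) ^ (2 : ℝ)) = 0
  · rw [key hz]; exact zero_le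
  push Not at hz
  obtain ⟨hz1, hz2⟩ := hz
  set a := (∑' i : ℤ, (eLpNorm (f i) 2 volume) ^ (2 : ℝ)) with ha
  set b := (∑' i : ℤ, (eLpNorm (g i) 2 volume) ^ (2 : ℝ)) with hb
  set α := √a.toReal with hα
  set β := √b.toReal with hβ
  have pa : 0 < α := Real.sqrt_pos.2 (ENNReal.toReal_pos hz1 hfs.ne)
  have pb : 0 < β := Real.sqrt_pos.2 (ENNReal.toReal_pos hz2 hgs.ne)
  have ea : a = ENNReal.ofReal (α ^ 2) := by
    rw [hα, Real.sq_sqrt ENNReal.toReal_nonneg, ENNReal.ofReal_toReal hfs.ne]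
  have eb : b = ENNReal.ofReal (β ^ 2) := by
    rw [hβ, Real.sq_sqrt ENNReal.toReal_nonneg, ENNReal.ofReal_toReal hgs.ne]
  have ra : a ^ ((1 : ℝ) / 2) = ENNReal.ofReal α := by
    rw [ea, ENNReal.ofReal_rpow_of_nonneg (by positivity) (by norm_num), ← Real.sqrt_eq_rpow,
      Real.sqrt_sq pa.le]
  have rb : b ^ ((1 : ℝ) / 2) = ENNReal.ofReal β := by
    rw [eb, ENNReal.ofReal_rpow_of_nonneg (by positivity) (by norm_num), ← Real.sqrt_eq_rpow,
      Real.sqrt_sq pb.le]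
  set c := √(β / (lam * α)) with hc
  set d := √(α / (lam * β)) with hd
  have c2 : c ^ 2 = β / (lam * α) := Real.sq_sqrt (by positivity)
  have d2 : d ^ 2 = α / (lam * β) := Real.sq_sqrt (by positivity)
  have pc : 0 ≤ c := Real.sqrt_nonneg _
  have pd : 0 ≤ d := Real.sqrt_nonneg _
  have cd : c * d = lam⁻¹ := by
    rw [← Real.sqrt_sq (show 0 ≤ lam⁻¹ by positivity), hc, hd, ← Real.sqrt_mul (by positivity)]
    congr 1; field_simp
  -- measurable representatives
  set u : ℤ → ℝ → ℂ := fun i => (hf i).1.mk (f i) with hu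
  set v : ℤ → ℝ → ℂ := fun i => (hg i).1.mk (g i) with hv
  have uae : ∀ i, f i =ᵐ[volume] u i := fun i => (hf i).1.ae_eq_mk
  have vae : ∀ i, g i =ᵐ[volume] v i := fun i => (hg i).1.ae_eq_mk
  have um : ∀ i, Measurable (u i) := fun i => (hf i).1.stronglyMeasurable_mk.measurable
  have vm : ∀ i, Measurable (v i) := fun i => (hg i).1.stronglyMeasurable_mk.measurable
  have uL : ∀ i, MemLp (u i) 2 := fun i => (hf i).ae_eq (uae i)
  have vL : ∀ i, MemLp (v i) 2 := fun i => (hg i).ae_eq (vae i)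
  have ua : (∑' i : ℤ, (eLpNorm (u i) 2 volume) ^ (2 : ℝ)) = a := by
    rw [ha]; congr 1; ext i; rw [eLpNorm_congr_ae (uae i)]
  have vb : (∑' i : ℤ, (eLpNorm (v i) 2 volume) ^ (2 : ℝ)) = b := by
    rw [hb]; congr 1; ext i; rw [eLpNorm_congr_ae (vae i)]
  have hfin := hmain (fun i y => (c : ℂ) * u i y) (fun i y => (d : ℂ) * v i y)
    (fun i => measurable_const.mul (um i)) (fun i => (uL i).const_mul _)
    (fun i => measurable_const.mul (vm i)) (fun i => (vL i).const_mul _) Nk hN.2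
  have hSS : ∀ m n x, SS φ (fun i y => (c : ℂ) * u i y) (fun i y => (d : ℂ) * v i y) m n x
      = (lam⁻¹ : ℝ) * SS φ f g m n x := by
    intro m n x
    unfold SS
    rw [Finset.mul_sum]
    refine Finset.sum_congr rfl fun j _ => ?_
    rw [Finset.mul_sum]
    refine Finset.sum_congr rfl fun i _ => ?_
    rw [conv_smul, conv_smul, conv_congr _ _ _ (uae i), conv_congr _ _ _ (vae j), ← cd]
    push_cast; ring
  have hset : ∀ x, {k : ℕ | 1 < ‖SS φ (fun i y => (c : ℂ) * u i y) (fun i y => (d : ℂ) * v i y)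
      (Nk k x) (Nk (k + 1) x) x‖} = {k : ℕ | lam < ‖SS φ f g (Nk k x) (Nk (k + 1) x) x‖} := by
    intro x; ext k
    simp only [Set.mem_ofPred_eq]
    rw [hSS, norm_mul, Complex.norm_real, Real.norm_of_nonneg (by positivity), inv_mul_eq_div,
      one_lt_div hlam]
  simp_rw [hset] at hfin
  refine hfin.trans ?_
  rw [sum_scale u c pc, sum_scale v d pd, ua, vb, ra, rb, ea, eb, ← ENNReal.ofReal_mul (by positivity),
    ← ENNReal.ofReal_mul (by positivity), c2, d2, ← ENNReal.ofReal_inv_of_pos hlam]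
  have e1 : β / (lam * α) * α ^ 2 = lam⁻¹ * α * β := by field_simp
  have e2 : α / (lam * β) * β ^ 2 = lam⁻¹ * α * β := by field_simp
  have e3 : ∀ X : ℝ≥0∞, X * ENNReal.ofReal lam⁻¹ * ENNReal.ofReal α * ENNReal.ofReal β
      = X * ENNReal.ofReal (lam⁻¹ * α * β) := by
    intro X
    rw [ENNReal.ofReal_mul (by positivity), ENNReal.ofReal_mul (by positivity)]; ring
  rw [e1, e2, e3]
  have eK : ((2 * K.toNNReal + 1 : ℝ≥0) : ℝ≥0∞) = 2 * K + 1 := by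
    push_cast; rw [ENNReal.coe_toNNReal hK.ne]
  rw [eK, ← two_mul, ← mul_assoc, mul_comm K]
  exact mul_le_mul_left le_self_add _

end JumpAux

/-- The diagonal weak-type `L² × L²` jump-counting estimate at the core of the
bilinear theorem (`r = s = p = q = 2`, `t = 1`). -/
theorem diagonal_weak_L2_jump_estimate
    (Nb : ℝ) (hNb : 0 < Nb) (φ : SchwartzMap ℝ ℂ)
    (hφ : ∀ ξ : ℝ, 𝓕 (⇑φ) ξ ≠ 0 → (2 : ℝ) ^ (-Nb) < |ξ| ∧ |ξ| < (2 : ℝ) ^ Nb) :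
    ∃ C : ℝ≥0, 0 < C ∧
      ∀ (f g : ℤ → ℝ → ℂ),
      (∀ i, MemLp (f i) 2) → (∀ j, MemLp (g j) 2) →
      (∑' i : ℤ, (eLpNorm (f i) 2 volume) ^ (2 : ℝ)) < ⊤ →
      (∑' j : ℤ, (eLpNorm (g j) 2 volume) ^ (2 : ℝ)) < ⊤ →
      ∀ (Nk : ℕ → ℝ → ℤ), IsJumpCollection Nk →
      ∀ lam : ℝ, 0 < lam →
      (∫⁻ x : ℝ,
          (({k : ℕ | lam < norm
              (∑ j ∈ Finset.Ioc (Nk k x) (Nk (k + 1) x),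
                ∑ i ∈ Finset.Ioo (Nk k x) j,
                  conv (dilate φ i) (f i) x * conv (dilate φ j) (g j) x)}.encard
            : ℝ≥0∞)))
        ≤ (C : ℝ≥0∞) * (ENNReal.ofReal lam)⁻¹ *
            (∑' i : ℤ, (eLpNorm (f i) 2 volume) ^ (2 : ℝ)) ^ ((1 : ℝ) / 2) *
            (∑' j : ℤ, (eLpNorm (g j) 2 volume) ^ (2 : ℝ)) ^ ((1 : ℝ) / 2) := by
  exact JumpAux.final Nb φ hφ

end
end

section
/- For x ∈ ℝ and i ∈ ℤ let E_i h(x) denote the average of h over the dyadic interval of length 2^{−i} containing x, and set Δ_i := E_i − E_{i−1} (the Haar/martingale-difference projection at scale 2^{1−i}). There exists an absolute constant C such that for all f, g ∈ L^2(ℝ) and every jump collection (N_k)_{k≥0} which is a stopping time — i.e., for every k and x, the function N_k is constant on the dyadic interval of length 2^{−N_k(x)} containing x — one has ∫_ℝ Σ_{k≥1} | Σ_{N_{k−1}(x) < i < j ≤ N_k(x)} Δ_i f(x) · Δ_j g(x) | dx ≤ C ‖f‖_{L^2} ‖g‖_{L^2}. -/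
open MeasureTheory ENNReal
open scoped NNReal

noncomputable section

/-- The average `E_i h (x)` of `h` over the dyadic interval of length `2^(-i)`
containing `x`. -/
def dyadicAvg (i : ℤ) (h : ℝ → ℝ) (x : ℝ) : ℝ :=
  (2 : ℝ) ^ i *
    ∫ y in Set.Ico ((⌊x * (2 : ℝ) ^ i⌋ : ℝ) * (2 : ℝ) ^ (-i))
      (((⌊x * (2 : ℝ) ^ i⌋ : ℝ) + 1) * (2 : ℝ) ^ (-i)), h y

/-- The martingale difference (Haar projection) `Δ_i = E_i - E_(i-1)` at scale
`2^(1-i)`. -/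
def dyadicDiff (i : ℤ) (h : ℝ → ℝ) (x : ℝ) : ℝ :=
  dyadicAvg i h x - dyadicAvg (i - 1) h x

/-- `Nk` is a stopping time: for every `k` and `x`, the function `Nk k` is constant on
the dyadic interval of length `2^(-Nk k x)` containing `x`. -/
def IsStoppingJump (Nk : ℕ → ℝ → ℤ) : Prop :=
  (∀ k, Measurable (Nk k)) ∧ (∀ (k : ℕ) (x : ℝ), Nk k x ≤ Nk (k + 1) x) ∧
  ∀ (k : ℕ) (x y : ℝ),
    y ∈ Set.Ico ((⌊x * (2 : ℝ) ^ (Nk k x)⌋ : ℝ) * (2 : ℝ) ^ (-(Nk k x)))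
        (((⌊x * (2 : ℝ) ^ (Nk k x)⌋ : ℝ) + 1) * (2 : ℝ) ^ (-(Nk k x))) →
    Nk k y = Nk k x

namespace StopBil

/-- dyadic index of `x` at scale `n` -/
def D (n : ℤ) (x : ℝ) : ℤ := ⌊x * (2 : ℝ) ^ n⌋

/-- swap of the two dyadic siblings of scale `n` -/
def sw (n : ℤ) (x : ℝ) : ℝ := if Even (D n x) then x + (2:ℝ) ^ (-n) else x - (2:ℝ) ^ (-n)

/-- dyadic interval of scale `n` containing `x` -/
def I (n : ℤ) (x : ℝ) : Set ℝ :=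
  Set.Ico ((⌊x * (2 : ℝ) ^ n⌋ : ℝ) * (2 : ℝ) ^ (-n))
      (((⌊x * (2 : ℝ) ^ n⌋ : ℝ) + 1) * (2 : ℝ) ^ (-n))

lemma mem_I {n : ℤ} {x y : ℝ} : y ∈ I n x ↔ D n y = D n x := by
  have h2 : (0:ℝ) < 2 ^ n := by positivity
  unfold I D
  rw [Set.mem_Ico, Int.floor_eq_iff, zpow_neg, ← div_eq_mul_inv, ← div_eq_mul_inv,
    div_le_iff₀ h2, lt_div_iff₀ h2]

lemma measurable_D (n : ℤ) : Measurable (D n) := by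
  unfold D
  exact Int.measurable_floor.comp (measurable_id.mul_const _)

lemma D_pred (n : ℤ) (x : ℝ) : D (n - 1) x = D n x / 2 := by
  have h2 : (0:ℝ) < 2 ^ n := by positivity
  have e : (2:ℝ) ^ (n - 1) = 2 ^ n / 2 := by rw [zpow_sub₀ (by norm_num)]; simp
  unfold D
  rw [e, Int.floor_eq_iff]
  have h1 := Int.floor_le (x * 2 ^ n)
  have h3 := Int.lt_floor_add_one (x * 2 ^ n)
  set m := ⌊x * (2:ℝ) ^ n⌋
  have h4 : ((m / 2 : ℤ) : ℝ) * 2 ≤ m := by exact_mod_cast (by omega : (m / 2) * 2 ≤ m)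
  have h5 : (m : ℝ) + 1 ≤ ((m / 2 : ℤ) : ℝ) * 2 + 2 := by
    exact_mod_cast (by omega : m + 1 ≤ (m / 2) * 2 + 2)
  constructor <;> linarith

lemma D_mono {m n : ℤ} (h : m ≤ n) {x y : ℝ} (hxy : D n x = D n y) : D m x = D m y := by
  induction m, h using Int.leInductionDown with
  | base => exact hxy
  | pred k _ ih => rw [D_pred, D_pred, ih]

lemma D_add (n : ℤ) (x : ℝ) : D n (x + 2 ^ (-n)) = D n x + 1 := by
  unfold D
  rw [add_mul, zpow_neg, inv_mul_cancel₀ (by positivity), Int.floor_add_one]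

lemma D_sub (n : ℤ) (x : ℝ) : D n (x - 2 ^ (-n)) = D n x - 1 := by
  unfold D
  rw [sub_mul, zpow_neg, inv_mul_cancel₀ (by positivity), Int.floor_sub_one]

lemma D_sw (n : ℤ) (x : ℝ) : D n (sw n x) = if Even (D n x) then D n x + 1 else D n x - 1 := by
  unfold sw
  split_ifs
  · exact D_add n x
  · exact D_sub n x

lemma D_sw_ne (n : ℤ) (x : ℝ) : D n (sw n x) ≠ D n x := by
  rw [D_sw]; split_ifs <;> omega

lemma D_pred_sw (n : ℤ) (x : ℝ) : D (n - 1) (sw n x) = D (n - 1) x := by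
  rw [D_pred, D_pred, D_sw]; split_ifs with h
  · rw [Int.even_iff] at h; omega
  · rw [Int.even_iff] at h; omega

lemma I_union (n : ℤ) (x : ℝ) : I (n - 1) x = I n x ∪ I n (sw n x) := by
  ext y
  rw [Set.mem_union, mem_I, mem_I, mem_I, D_sw, D_pred, D_pred]
  split_ifs with h <;> rw [Int.even_iff] at h <;> omega

lemma I_disj (n : ℤ) (x : ℝ) : Disjoint (I n x) (I n (sw n x)) := by
  rw [Set.disjoint_left]
  intro y h1 h2
  rw [mem_I] at h1 h2
  exact D_sw_ne n x (h2.symm.trans h1)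

lemma lintegral_sw (n : ℤ) (h : ℝ → ℝ≥0∞) (hh : Measurable h) :
    ∫⁻ x, h (sw n x) = ∫⁻ x, h x := by
  set E : Set ℝ := {x | Even (D n x)} with hE
  have mE : MeasurableSet E := (measurable_D n) (MeasurableSet.of_discrete (s := {m : ℤ | Even m}))
  have e1 : ∀ x, h (sw n x) = (Eᶜ.indicator h) (x + 2 ^ (-n)) + (E.indicator h) (x - 2 ^ (-n)) := by
    intro x
    unfold sw
    by_cases hx : Even (D n x)
    · have h1 : x + 2 ^ (-n) ∈ Eᶜ := by
        simp only [hE, Set.mem_compl_iff, Set.mem_ofPred_eq, D_add]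
        rw [Int.even_iff] at *; omega
      have h2 : x - 2 ^ (-n) ∉ E := by
        simp only [hE, Set.mem_ofPred_eq, D_sub]
        rw [Int.even_iff] at *; omega
      rw [if_pos hx, Set.indicator_of_mem h1, Set.indicator_of_notMem h2, add_zero]
    · have h1 : x + 2 ^ (-n) ∉ Eᶜ := by
        simp only [hE, Set.mem_compl_iff, Set.mem_ofPred_eq, D_add, not_not]
        rw [Int.even_iff] at *; omega
      have h2 : x - 2 ^ (-n) ∈ E := by
        simp only [hE, Set.mem_ofPred_eq, D_sub]
        rw [Int.even_iff] at *; omega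
      rw [if_neg hx, Set.indicator_of_notMem h1, Set.indicator_of_mem h2, zero_add]
  simp_rw [e1]
  have m1 : Measurable fun x : ℝ => Eᶜ.indicator h (x + 2 ^ (-n)) :=
    (hh.indicator mE.compl).comp (measurable_id.add_const _)
  rw [lintegral_add_left m1,
    lintegral_add_right_eq_self (Eᶜ.indicator h), lintegral_sub_right_eq_self (E.indicator h),
    lintegral_indicator mE.compl, lintegral_indicator mE, add_comm, lintegral_add_compl _ mE]

/-- constant on dyadic intervals of scale `n` -/
def DC {β : Type*} (n : ℤ) (u : ℝ → β) : Prop := ∀ x y, D n x = D n y → u x = u y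

lemma DC.measurable {β : Type*} [MeasurableSpace β] {n : ℤ} {u : ℝ → β} (h : DC n u) :
    Measurable u := by
  have : u = (fun m : ℤ => u ((m : ℝ) * 2 ^ (-n))) ∘ D n := by
    funext x
    apply h
    simp only [D]
    rw [mul_assoc, zpow_neg, inv_mul_cancel₀ (by positivity), mul_one, Int.floor_intCast]
  rw [this]
  exact Measurable.of_discrete.comp (measurable_D n)

lemma DC.mono {β : Type*} {m n : ℤ} (hmn : m ≤ n) {u : ℝ → β} (h : DC m u) : DC n u :=
  fun x y hxy => h x y (D_mono hmn hxy)

lemma avg_DC (n : ℤ) (f : ℝ → ℝ) : DC n (dyadicAvg n f) := by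
  intro x y h
  unfold D at h
  unfold dyadicAvg
  rw [h]

lemma diff_DC (n : ℤ) (f : ℝ → ℝ) : DC n (dyadicDiff n f) := by
  intro x y h
  unfold dyadicDiff
  rw [avg_DC n f x y h, (avg_DC (n-1) f).mono (by omega) x y h]

lemma memLp_int {f : ℝ → ℝ} (hf : MemLp f 2) (n : ℤ) (x : ℝ) : IntegrableOn f (I n x) := by
  have : IsFiniteMeasure (volume.restrict (I n x)) := by
    constructor; simp [I]
  exact (hf.restrict (I n x)).integrable (by norm_num)

lemma avg_sw {f : ℝ → ℝ} (hf : MemLp f 2) (n : ℤ) (x : ℝ) :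
    dyadicAvg n f x + dyadicAvg n f (sw n x) = 2 * dyadicAvg (n - 1) f x := by
  have h := setIntegral_union (I_disj n x) (measurableSet_Ico) (memLp_int hf n x)
    (memLp_int hf n (sw n x))
  rw [← I_union] at h
  have e : (2:ℝ) ^ (n - 1) = 2 ^ n / 2 := by rw [zpow_sub₀ (by norm_num)]; simp
  change 2 ^ n * (∫ y in I n x, f y) + 2 ^ n * (∫ y in I n (sw n x), f y)
    = 2 * (2 ^ (n-1) * ∫ y in I (n-1) x, f y)
  rw [h, e]; ring

lemma diff_sw {f : ℝ → ℝ} (hf : MemLp f 2) (n : ℤ) (x : ℝ) :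
    dyadicDiff n f (sw n x) = - dyadicDiff n f x := by
  have h1 := avg_sw hf n x
  have h2 := avg_DC (n-1) f _ _ (D_pred_sw n x)
  unfold dyadicDiff
  linarith

/-- Bellman function -/
def phi (F P : ℝ) : ℝ := Real.sqrt (P ^ 2 + F ^ 4)

lemma phi_nonneg (F P : ℝ) : 0 ≤ phi F P := Real.sqrt_nonneg _

lemma abs_le_phi (F P : ℝ) : |P| ≤ phi F P := by
  apply Real.abs_le_sqrt
  nlinarith [sq_nonneg (F ^ 2)]

lemma sq_le_phi (F P : ℝ) : F ^ 2 ≤ phi F P := by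
  apply Real.le_sqrt_of_sq_le
  nlinarith [sq_nonneg P]

lemma phi_le (F P : ℝ) : phi F P ≤ |P| + F ^ 2 := by
  apply Real.sqrt_le_iff.2
  refine ⟨by positivity, ?_⟩
  have := sq_abs P
  nlinarith [mul_nonneg (abs_nonneg P) (sq_nonneg F)]

lemma phi_tangent (F P A : ℝ) (hA : 0 < A) : phi F P ≤ (P ^ 2 + F ^ 4 + A ^ 2) / (2 * A) := by
  rw [le_div_iff₀ (by positivity)]
  have : phi F P ^ 2 = P ^ 2 + F ^ 4 := Real.sq_sqrt (by positivity)
  nlinarith [sq_nonneg (phi F P - A)]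

lemma phi_step (F P a b : ℝ) :
    phi (F + a) (P + F * b) + phi (F - a) (P - F * b) ≤ 2 * phi F P + 8 * (a ^ 2 + b ^ 2) := by
  have hA0 := phi_nonneg F P
  have hP := abs_le_phi F P
  have hF := sq_le_phi F P
  have hsq : phi F P ^ 2 = P ^ 2 + F ^ 4 := Real.sq_sqrt (by positivity)
  set A := phi F P
  by_cases h : 0 < A ∧ a ^ 2 ≤ A
  · obtain ⟨hA, ha⟩ := h
    have h1 := phi_tangent (F + a) (P + F * b) A hA
    have h2 := phi_tangent (F - a) (P - F * b) A hA
    refine (add_le_add h1 h2).trans ?_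
    rw [← add_div, div_le_iff₀ (by positivity)]
    have := mul_nonneg (sub_nonneg.2 hF) (sq_nonneg a)
    have := mul_nonneg (sub_nonneg.2 hF) (sq_nonneg b)
    have := mul_nonneg (sub_nonneg.2 ha) (sq_nonneg a)
    have := mul_nonneg hA0 (sq_nonneg a)
    have := mul_nonneg hA0 (sq_nonneg b)
    nlinarith
  · have ha : A ≤ a ^ 2 := by
      by_contra hc
      push Not at hc
      exact h ⟨lt_of_le_of_lt (sq_nonneg a) hc, hc.le⟩
    have h1 := phi_le (F + a) (P + F * b)
    have h2 := phi_le (F - a) (P - F * b)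
    have h3 : |P + F * b| ≤ |P| + |F * b| := abs_add_le _ _
    have h4 : |P - F * b| ≤ |P| + |F * b| := abs_sub _ _
    have h5 : |F * b| ≤ (F ^ 2 + b ^ 2) / 2 := by
      rw [abs_le]; constructor <;> nlinarith [sq_nonneg (F + b), sq_nonneg (F - b)]
    nlinarith [sq_nonneg b]

lemma step {n : ℤ} {F P α β : ℝ → ℝ} (hF : DC (n - 1) F) (hP : DC (n - 1) P) (hα : DC n α)
    (hβ : DC n β) (sα : ∀ x, α (sw n x) = - α x) (sβ : ∀ x, β (sw n x) = - β x) :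
    ∫⁻ x, ENNReal.ofReal (phi (F x + α x) (P x + F x * β x)) ≤
      (∫⁻ x, ENNReal.ofReal (phi (F x) (P x))) + 4 * ∫⁻ x, ENNReal.ofReal (α x ^ 2 + β x ^ 2) := by
  have mφ : Measurable fun z : ℝ × ℝ => phi z.1 z.2 := by unfold phi; fun_prop
  have mF := hF.measurable
  have mP := hP.measurable
  have mα := hα.measurable
  have mβ := hβ.measurable
  have m1 : Measurable fun x => ENNReal.ofReal (phi (F x + α x) (P x + F x * β x)) :=
    (mφ.comp ((mF.add mα).prodMk (mP.add (mF.mul mβ)))).ennreal_ofReal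
  have m2 : Measurable fun x => ENNReal.ofReal (phi (F x) (P x)) :=
    (mφ.comp (mF.prodMk mP)).ennreal_ofReal
  have m3 : Measurable fun x => ENNReal.ofReal (α x ^ 2 + β x ^ 2) := by fun_prop
  have key : 2 * ∫⁻ x, ENNReal.ofReal (phi (F x + α x) (P x + F x * β x)) ≤
      2 * ((∫⁻ x, ENNReal.ofReal (phi (F x) (P x))) +
        4 * ∫⁻ x, ENNReal.ofReal (α x ^ 2 + β x ^ 2)) := by
    nth_rw 1 [two_mul]
    nth_rw 2 [← lintegral_sw n _ m1]
    rw [← lintegral_add_left m1, ← lintegral_const_mul _ m3, ← lintegral_add_left m2,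
      ← lintegral_const_mul _ (m2.fun_add (m3.const_mul 4))]
    apply lintegral_mono
    intro x
    have h1 := hF _ _ (D_pred_sw n x)
    have h2 := hP _ _ (D_pred_sw n x)
    simp only [h1, h2, sα, sβ]
    have h := phi_step (F x) (P x) (α x) (β x)
    have e2 : (2 : ℝ≥0∞) = ENNReal.ofReal 2 := by simp
    have e4 : (4 : ℝ≥0∞) = ENNReal.ofReal 4 := by simp
    rw [e2, e4, ← ENNReal.ofReal_add (phi_nonneg _ _) (phi_nonneg _ _),
      ← ENNReal.ofReal_mul (by norm_num),
      ← ENNReal.ofReal_add (phi_nonneg _ _) (by positivity), ← ENNReal.ofReal_mul (by norm_num)]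
    apply ENNReal.ofReal_le_ofReal
    rw [mul_neg, ← sub_eq_add_neg, ← sub_eq_add_neg]
    linarith
  exact (ENNReal.mul_le_mul_iff_right (by norm_num) (by norm_num)).1 key

lemma Ioc_succ {a n : ℤ} (h : a ≤ n) : Finset.Ioc a (n + 1) = insert (n + 1) (Finset.Ioc a n) := by
  ext x; simp only [Finset.mem_Ioc, Finset.mem_insert]; omega

lemma sum_Ioc_succ {M : Type*} [AddCommMonoid M] {a n : ℤ} (h : a ≤ n) (u : ℤ → M) :
    ∑ i ∈ Finset.Ioc a (n + 1), u i = ∑ i ∈ Finset.Ioc a n, u i + u (n + 1) := by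
  rw [Ioc_succ h, Finset.sum_insert (by simp), add_comm]

lemma Ioo_succ (a n : ℤ) : Finset.Ioo a (n + 1) = Finset.Ioc a n := by
  ext x; simp only [Finset.mem_Ioc, Finset.mem_Ioo]; omega

/-- partial paraproduct -/
def para (α β : ℤ → ℝ → ℝ) (a n : ℤ) (x : ℝ) : ℝ :=
  ∑ j ∈ Finset.Ioc a n, (∑ i ∈ Finset.Ioo a j, α i x) * β j x

lemma sum_DC {α : ℤ → ℝ → ℝ} (hα : ∀ n, DC n (α n)) (a n : ℤ) :
    DC n (fun x => ∑ i ∈ Finset.Ioc a n, α i x) := by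
  intro x y h
  apply Finset.sum_congr rfl
  intro i hi
  exact hα i x y (D_mono (Finset.mem_Ioc.1 hi).2 h)

lemma para_DC {α β : ℤ → ℝ → ℝ} (hα : ∀ n, DC n (α n)) (hβ : ∀ n, DC n (β n)) (a n : ℤ) :
    DC n (para α β a n) := by
  intro x y h
  apply Finset.sum_congr rfl
  intro j hj
  rw [hβ j x y (D_mono (Finset.mem_Ioc.1 hj).2 h)]
  congr 1
  apply Finset.sum_congr rfl
  intro i hi
  have h1 := Finset.mem_Ioc.1 hj
  have h2 := Finset.mem_Ioo.1 hi
  exact hα i x y (D_mono (by omega) h)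

lemma para_bound {α β : ℤ → ℝ → ℝ} (hα : ∀ n, DC n (α n)) (hβ : ∀ n, DC n (β n))
    (sα : ∀ n x, α n (sw n x) = - α n x) (sβ : ∀ n x, β n (sw n x) = - β n x)
    {a n : ℤ} (h : a ≤ n) :
    ∫⁻ x, ENNReal.ofReal (phi (∑ i ∈ Finset.Ioc a n, α i x) (para α β a n x)) ≤
      4 * ∑ j ∈ Finset.Ioc a n, ∫⁻ x, ENNReal.ofReal (α j x ^ 2 + β j x ^ 2) := by
  induction n, h using Int.leInduction with
  | base => simp [para, phi]
  | succ n hn ih =>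
    have h1 := sum_DC hα a n
    have h2 := para_DC hα hβ a n
    have := step (n := n + 1) (by simpa using h1) (by simpa using h2) (hα (n+1)) (hβ (n+1))
      (sα (n+1)) (sβ (n+1))
    simp only [para, sum_Ioc_succ hn, Ioo_succ] at *
    rw [mul_add]
    exact this.trans (by gcongr)

lemma sq_step {f : ℝ → ℝ} (hf : MemLp f 2) (n : ℤ) :
    (∫⁻ x, ENNReal.ofReal (dyadicAvg (n - 1) f x ^ 2)) + ∫⁻ x, ENNReal.ofReal (dyadicDiff n f x ^ 2)
      = ∫⁻ x, ENNReal.ofReal (dyadicAvg n f x ^ 2) := by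
  have mA := (avg_DC n f).measurable
  have mB := (avg_DC (n - 1) f).measurable
  have mD := (diff_DC n f).measurable
  have m1 : Measurable fun x => ENNReal.ofReal (dyadicAvg n f x ^ 2) := by fun_prop
  have m2 : Measurable fun x => ENNReal.ofReal (dyadicAvg (n - 1) f x ^ 2) := by fun_prop
  have m3 : Measurable fun x => ENNReal.ofReal (dyadicDiff n f x ^ 2) := by fun_prop
  refine (ENNReal.mul_right_inj (a := 2) (by norm_num) (by norm_num)).1 ?_
  nth_rw 2 [two_mul]
  nth_rw 2 [← lintegral_sw n _ m1]
  rw [← lintegral_add_left m1, ← lintegral_add_left m2, ← lintegral_const_mul _ (m2.fun_add m3)]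
  apply lintegral_congr
  intro x
  have h := avg_sw hf n x
  have e2 : (2 : ℝ≥0∞) = ENNReal.ofReal 2 := by simp
  rw [e2, ← ENNReal.ofReal_add (by positivity) (by positivity),
    ← ENNReal.ofReal_add (by positivity) (by positivity), ← ENNReal.ofReal_mul (by norm_num)]
  congr 1
  have h' : dyadicAvg n f (sw n x) = 2 * dyadicAvg (n - 1) f x - dyadicAvg n f x := by linarith
  rw [h', dyadicDiff]
  ring

lemma sq_sum {f : ℝ → ℝ} (hf : MemLp f 2) {a n : ℤ} (h : a ≤ n) :
    ∑ j ∈ Finset.Ioc a n, ∫⁻ x, ENNReal.ofReal (dyadicDiff j f x ^ 2) ≤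
      ∫⁻ x, ENNReal.ofReal (dyadicAvg n f x ^ 2) := by
  induction n, h using Int.leInduction with
  | base => simp
  | succ n hn ih =>
    rw [sum_Ioc_succ hn, ← sq_step hf (n + 1), add_sub_cancel_right]
    gcongr

lemma avg_sq_le {f : ℝ → ℝ} (hf : MemLp f 2) (n : ℤ) :
    ∫⁻ x, ENNReal.ofReal (dyadicAvg n f x ^ 2) ≤ ∫⁻ x, ENNReal.ofReal (f x ^ 2) := by
  have hU : (⋃ m : ℤ, D n ⁻¹' {m}) = Set.univ := by ext x; simp
  have hm : ∀ m : ℤ, MeasurableSet (D n ⁻¹' {m}) := fun m => measurable_D n (by measurability)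
  have hd : Pairwise (Function.onFun Disjoint fun m : ℤ => D n ⁻¹' {m}) := by
    intro i j hij
    rw [Function.onFun, Set.disjoint_left]
    intro x h1 h2
    exact hij (h1.symm.trans h2)
  rw [← setLIntegral_univ, ← setLIntegral_univ (fun x => ENNReal.ofReal (f x ^ 2)), ← hU,
    lintegral_iUnion hm hd, lintegral_iUnion hm hd]
  apply ENNReal.tsum_le_tsum
  intro m
  obtain ⟨x0, hx0⟩ : ∃ x0, D n x0 = m := by
    refine ⟨(m:ℝ) * 2 ^ (-n), ?_⟩
    unfold D
    rw [mul_assoc, zpow_neg, inv_mul_cancel₀ (by positivity), mul_one, Int.floor_intCast]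
  have hS : D n ⁻¹' {m} = I n x0 := by
    ext y; rw [mem_I, hx0]; rfl
  rw [hS]
  have i1 := memLp_int hf n x0
  have i2 : IntegrableOn (fun x => f x ^ 2) (I n x0) := (hf.integrable_sq).integrableOn
  have hfin : volume (I n x0) ≠ ∞ := by simp [I]
  have hvol : volume.real (I n x0) = 2 ^ (-n) := by
    unfold I
    rw [Real.volume_real_Ico]
    rw [max_eq_left]
    · ring
    · have : (0:ℝ) < 2 ^ (-n) := by positivity
      nlinarith
  set c := dyadicAvg n f x0 with hc
  have hc' : c = 2 ^ n * ∫ y in I n x0, f y := rfl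
  have e1 : ∫⁻ x in I n x0, ENNReal.ofReal (dyadicAvg n f x ^ 2)
      = ∫⁻ x in I n x0, ENNReal.ofReal (c ^ 2) := by
    apply setLIntegral_congr_fun measurableSet_Ico
    intro x hx
    simp only [hc]
    rw [avg_DC n f x x0 (mem_I.1 hx)]
  have ic : IntegrableOn (fun _ : ℝ => c ^ 2) (I n x0) := integrableOn_const hfin
  have e2 : 0 ≤ ∫ x in I n x0, (f x - c) ^ 2 := integral_nonneg (fun x => sq_nonneg _)
  have e3 : ∫ x in I n x0, (f x - c) ^ 2
      = (∫ x in I n x0, f x ^ 2) - 2 * c * (∫ x in I n x0, f x) + ∫ x in I n x0, c ^ 2 := by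
    have i3 : IntegrableOn (fun x => f x ^ 2 - 2 * c * f x) (I n x0) :=
      i2.sub (i1.const_mul (2 * c))
    rw [← integral_const_mul, ← integral_sub i2 (i1.const_mul _), ← integral_add i3 ic]
    congr 1; ext x; ring
  have e4 : ∫ x in I n x0, c ^ 2 = 2 ^ (-n) * c ^ 2 := by
    rw [setIntegral_const, hvol]; rfl
  have e5 : ∫ x in I n x0, f x = 2 ^ (-n) * c := by
    rw [hc', ← mul_assoc, ← zpow_add₀ (by norm_num)]; simp
  rw [e1, ← ofReal_integral_eq_lintegral_ofReal ic (ae_of_all _ fun _ => sq_nonneg _),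
    ← ofReal_integral_eq_lintegral_ofReal i2 (ae_of_all _ fun _ => sq_nonneg _)]
  apply ENNReal.ofReal_le_ofReal
  rw [e4]
  rw [e3, e4, e5] at e2
  linarith

lemma sq_sum' {f : ℝ → ℝ} (hf : MemLp f 2) {a n : ℤ} (h : a ≤ n) :
    ∑ j ∈ Finset.Ioc a n, ∫⁻ x, ENNReal.ofReal (dyadicDiff j f x ^ 2) ≤
      ∫⁻ x, ENNReal.ofReal (f x ^ 2) := (sq_sum hf h).trans (avg_sq_le hf n)

lemma lint_sq (f : ℝ → ℝ) :
    ∫⁻ x, ENNReal.ofReal (f x ^ 2) = eLpNorm f 2 volume ^ 2 := by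
  have := eLpNorm_nnreal_pow_eq_lintegral (μ := volume) (f := f) (p := 2) (by norm_num)
  simp only [NNReal.coe_ofNat, ENNReal.coe_ofNat, ENNReal.rpow_ofNat] at this
  rw [this]
  apply lintegral_congr
  intro x
  rw [← sq_abs, ← Real.norm_eq_abs, ENNReal.ofReal_pow (norm_nonneg _), ofReal_norm]

/-- the differences of `f` between the stopping times `Nk k` and `Nk (k+1)` -/
def cut (Nk : ℕ → ℝ → ℤ) (k : ℕ) (f : ℝ → ℝ) (j : ℤ) (x : ℝ) : ℝ :=
  if Nk k x < j ∧ j ≤ Nk (k + 1) x then dyadicDiff j f x else 0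

lemma stop_le {Nk : ℕ → ℝ → ℤ} (h : IsStoppingJump Nk) (k : ℕ) {m : ℤ} {x y : ℝ}
    (hxy : D m x = D m y) (hx : Nk k x ≤ m) : Nk k y ≤ m := by
  have h1 : D (Nk k x) x = D (Nk k x) y := D_mono hx hxy
  have h2 : y ∈ I (Nk k x) x := mem_I.2 h1.symm
  rw [h.2.2 k x y h2]
  exact hx

lemma stop_iff {Nk : ℕ → ℝ → ℤ} (h : IsStoppingJump Nk) (k : ℕ) {j : ℤ} {x y : ℝ}
    (hxy : D (j - 1) x = D (j - 1) y) :
    (Nk k x < j ∧ j ≤ Nk (k + 1) x) ↔ (Nk k y < j ∧ j ≤ Nk (k + 1) y) := by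
  have h1 := stop_le h k hxy
  have h2 := stop_le h k hxy.symm
  have h3 := stop_le h (k + 1) hxy
  have h4 := stop_le h (k + 1) hxy.symm
  omega

lemma cut_DC {Nk : ℕ → ℝ → ℤ} (h : IsStoppingJump Nk) (k : ℕ) (f : ℝ → ℝ) (j : ℤ) :
    DC j (cut Nk k f j) := by
  intro x y hxy
  unfold cut
  rw [diff_DC j f x y hxy]
  simp only [stop_iff h k (D_mono (by omega : j - 1 ≤ j) hxy)]

lemma cut_sw {Nk : ℕ → ℝ → ℤ} (h : IsStoppingJump Nk) (k : ℕ) {f : ℝ → ℝ} (hf : MemLp f 2)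
    (j : ℤ) (x : ℝ) : cut Nk k f j (sw j x) = - cut Nk k f j x := by
  unfold cut
  rw [diff_sw hf]
  simp only [stop_iff h k (D_pred_sw j x)]
  split_ifs <;> simp

lemma stop_mono {Nk : ℕ → ℝ → ℤ} (h : IsStoppingJump Nk) (x : ℝ) : Monotone fun k => Nk k x :=
  monotone_nat_of_le_succ fun k => h.2.1 k x

lemma cut_sum_le {Nk : ℕ → ℝ → ℤ} (h : IsStoppingJump Nk) (f : ℝ → ℝ) (j : ℤ) (x : ℝ) (K : ℕ) :
    ∑ k ∈ Finset.range K, cut Nk k f j x ^ 2 ≤ dyadicDiff j f x ^ 2 := by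
  by_cases hk : ∃ k ∈ Finset.range K, Nk k x < j ∧ j ≤ Nk (k + 1) x
  · obtain ⟨k, hkK, h1, h2⟩ := hk
    rw [Finset.sum_eq_single_of_mem k hkK]
    · simp [cut, h1, h2]
    · intro l _ hl
      have : ¬ (Nk l x < j ∧ j ≤ Nk (l + 1) x) := by
        rintro ⟨h3, h4⟩
        rcases lt_or_gt_of_ne hl with hlt | hlt
        · have : Nk (l + 1) x ≤ Nk k x := stop_mono h x (by omega)
          omega
        · have : Nk (k + 1) x ≤ Nk l x := stop_mono h x (by omega)
          omega
      simp [cut, this]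
  · push Not at hk
    rw [Finset.sum_eq_zero]
    · positivity
    · intro k hkK
      have : ¬ (Nk k x < j ∧ j ≤ Nk (k + 1) x) := by
        rintro ⟨h3, h4⟩
        have := hk k hkK h3
        omega
      simp [cut, this]

/-- the summand in the theorem -/
def T (f g : ℝ → ℝ) (Nk : ℕ → ℝ → ℤ) (k : ℕ) (x : ℝ) : ℝ :=
  ∑ j ∈ Finset.Ioc (Nk k x) (Nk (k + 1) x),
    ∑ i ∈ Finset.Ioo (Nk k x) j, dyadicDiff i f x * dyadicDiff j g x

lemma para_cut (f g : ℝ → ℝ) (Nk : ℕ → ℝ → ℤ) (k : ℕ) (x : ℝ) {a n : ℤ} (ha : a ≤ Nk k x)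
    (hn : Nk (k + 1) x ≤ n) : para (cut Nk k f) (cut Nk k g) a n x = T f g Nk k x := by
  unfold para T
  symm
  have hs : Finset.Ioc (Nk k x) (Nk (k + 1) x) ⊆ Finset.Ioc a n := by
    intro j; simp only [Finset.mem_Ioc]; omega
  rw [← Finset.sum_subset hs]
  · apply Finset.sum_congr rfl
    intro j hj
    have hj' := Finset.mem_Ioc.1 hj
    have hs' : Finset.Ioo (Nk k x) j ⊆ Finset.Ioo a j := by
      intro i; simp only [Finset.mem_Ioo]; omega
    rw [← Finset.sum_mul, ← Finset.sum_subset hs']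
    · congr 1
      · apply Finset.sum_congr rfl
        intro i hi
        have hi' := Finset.mem_Ioo.1 hi
        unfold cut
        rw [if_pos (by omega)]
      · unfold cut
        rw [if_pos (by omega)]
    · intro i h1 h2
      rw [Finset.mem_Ioo] at h1 h2
      unfold cut
      rw [if_neg (by omega)]
  · intro i h1 h2
    rw [Finset.mem_Ioc] at h1 h2
    unfold cut
    rw [if_neg (c := Nk k x < i ∧ i ≤ Nk (k + 1) x) (by omega), mul_zero]

lemma para_tendsto (f g : ℝ → ℝ) (Nk : ℕ → ℝ → ℤ) (k : ℕ) (x : ℝ) :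
    Filter.Tendsto (fun l : ℕ => para (cut Nk k f) (cut Nk k g) (-(l:ℤ)) l x) Filter.atTop
      (nhds (T f g Nk k x)) := by
  apply tendsto_const_nhds.congr'
  filter_upwards [Filter.eventually_ge_atTop ((Nk k x).natAbs + (Nk (k + 1) x).natAbs)] with l hl
  rw [para_cut] <;> omega

lemma fin_bound {f g : ℝ → ℝ} (hf : MemLp f 2) (hg : MemLp g 2) {Nk : ℕ → ℝ → ℤ}
    (h : IsStoppingJump Nk) (K l : ℕ) :
    ∑ k ∈ Finset.range K,
      ∫⁻ x, ENNReal.ofReal |para (cut Nk k f) (cut Nk k g) (-(l:ℤ)) l x| ≤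
      4 * ((∫⁻ x, ENNReal.ofReal (f x ^ 2)) + ∫⁻ x, ENNReal.ofReal (g x ^ 2)) := by
  have hl : -(l:ℤ) ≤ l := by omega
  calc _ ≤ ∑ k ∈ Finset.range K, 4 * ∑ j ∈ Finset.Ioc (-(l:ℤ)) l,
        ∫⁻ x, ENNReal.ofReal (cut Nk k f j x ^ 2 + cut Nk k g j x ^ 2) := by
        apply Finset.sum_le_sum
        intro k _
        refine le_trans ?_ (para_bound (cut_DC h k f) (cut_DC h k g) (cut_sw h k hf)
          (cut_sw h k hg) hl)
        apply lintegral_mono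
        intro x
        exact ENNReal.ofReal_le_ofReal (abs_le_phi _ _)
    _ = 4 * ∑ j ∈ Finset.Ioc (-(l:ℤ)) l, ∫⁻ x, ∑ k ∈ Finset.range K,
        ENNReal.ofReal (cut Nk k f j x ^ 2 + cut Nk k g j x ^ 2) := by
        rw [← Finset.mul_sum, Finset.sum_comm]
        congr 1
        apply Finset.sum_congr rfl
        intro j _
        rw [lintegral_finsetSum]
        intro k _
        have m1 := (cut_DC h k f j).measurable
        have m2 := (cut_DC h k g j).measurable
        fun_prop
    _ ≤ 4 * ∑ j ∈ Finset.Ioc (-(l:ℤ)) l, ((∫⁻ x, ENNReal.ofReal (dyadicDiff j f x ^ 2)) +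
        ∫⁻ x, ENNReal.ofReal (dyadicDiff j g x ^ 2)) := by
        gcongr with j _
        have m1 := (diff_DC j f).measurable
        rw [← lintegral_add_left (by fun_prop)]
        apply lintegral_mono
        intro x
        simp only
        rw [← ENNReal.ofReal_sum_of_nonneg (fun _ _ => by positivity),
          ← ENNReal.ofReal_add (by positivity) (by positivity)]
        apply ENNReal.ofReal_le_ofReal
        rw [Finset.sum_add_distrib]
        exact add_le_add (cut_sum_le h f j x K) (cut_sum_le h g j x K)
    _ ≤ _ := by
        rw [Finset.sum_add_distrib]
        gcongr
        · exact sq_sum' hf hl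
        · exact sq_sum' hg hl

lemma main_bound {f g : ℝ → ℝ} (hf : MemLp f 2) (hg : MemLp g 2) {Nk : ℕ → ℝ → ℤ}
    (h : IsStoppingJump Nk) :
    ∫⁻ x, ∑' k, ENNReal.ofReal |T f g Nk k x| ≤
      4 * (eLpNorm f 2 volume ^ 2 + eLpNorm g 2 volume ^ 2) := by
  have mp : ∀ (k l : ℕ), Measurable (para (cut Nk k f) (cut Nk k g) (-(l:ℤ)) l) := fun k l =>
    (para_DC (cut_DC h k f) (cut_DC h k g) _ _).measurable
  have mT : ∀ k, Measurable (T f g Nk k) := fun k =>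
    measurable_of_tendsto_metrizable (mp k) (tendsto_pi_nhds.2 fun x => para_tendsto f g Nk k x)
  have ma : ∀ u : ℝ → ℝ, Measurable u → Measurable fun x => ENNReal.ofReal |u x| := by
    intro u hu
    exact (continuous_abs.measurable.comp hu).ennreal_ofReal
  rw [lintegral_tsum fun k => (ma _ (mT k)).aemeasurable, ← lint_sq, ← lint_sq]
  apply ENNReal.tsum_le_of_sum_range_le
  intro K
  rw [← lintegral_finsetSum _ fun k _ => ma _ (mT k)]
  have lim : ∀ x, Filter.Tendsto (fun l : ℕ => ∑ k ∈ Finset.range K,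
      ENNReal.ofReal |para (cut Nk k f) (cut Nk k g) (-(l:ℤ)) l x|) Filter.atTop
      (nhds (∑ k ∈ Finset.range K, ENNReal.ofReal |T f g Nk k x|)) := fun x =>
    tendsto_finsetSum _ fun k _ => ENNReal.tendsto_ofReal (para_tendsto f g Nk k x).abs
  calc _ = ∫⁻ x, Filter.liminf (fun l : ℕ => ∑ k ∈ Finset.range K,
      ENNReal.ofReal |para (cut Nk k f) (cut Nk k g) (-(l:ℤ)) l x|) Filter.atTop := by
        apply lintegral_congr
        intro x
        exact (lim x).liminf_eq.symm
    _ ≤ Filter.liminf (fun l : ℕ => ∫⁻ x, ∑ k ∈ Finset.range K,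
      ENNReal.ofReal |para (cut Nk k f) (cut Nk k g) (-(l:ℤ)) l x|) Filter.atTop :=
        lintegral_liminf_le fun l => Finset.measurable_fun_sum _ fun k _ => ma _ (mp k l)
    _ ≤ _ := by
        apply Filter.liminf_le_of_le
        · isBoundedDefault
        · intro b hb
          obtain ⟨l, hl⟩ := hb.exists
          refine hl.trans ?_
          rw [lintegral_finsetSum _ fun k _ => ma _ (mp k l)]
          exact fin_bound hf hg h K l

lemma avg_smul (c : ℝ) (f : ℝ → ℝ) (n : ℤ) (x : ℝ) :
    dyadicAvg n (c • f) x = c * dyadicAvg n f x := by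
  unfold dyadicAvg
  simp only [Pi.smul_apply, smul_eq_mul]
  rw [integral_const_mul]; ring

lemma diff_smul (c : ℝ) (f : ℝ → ℝ) (n : ℤ) (x : ℝ) :
    dyadicDiff n (c • f) x = c * dyadicDiff n f x := by
  unfold dyadicDiff
  rw [avg_smul, avg_smul]; ring

lemma diff_zero {f : ℝ → ℝ} (hf : f =ᵐ[volume] 0) (n : ℤ) (x : ℝ) : dyadicDiff n f x = 0 := by
  have : ∀ n, dyadicAvg n f x = 0 := by
    intro n
    unfold dyadicAvg
    rw [integral_congr_ae (ae_restrict_of_ae hf)]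
    simp
  unfold dyadicDiff
  rw [this, this, sub_zero]

lemma final {f g : ℝ → ℝ} (hf : MemLp f 2) (hg : MemLp g 2) {Nk : ℕ → ℝ → ℤ}
    (h : IsStoppingJump Nk) :
    ∫⁻ x, ∑' k, ENNReal.ofReal |T f g Nk k x| ≤
      8 * eLpNorm f 2 volume * eLpNorm g 2 volume := by
  by_cases h1 : eLpNorm f 2 volume = 0
  · have := (eLpNorm_eq_zero_iff hf.1 (by norm_num)).1 h1
    simp [T, diff_zero this]
  by_cases h2 : eLpNorm g 2 volume = 0
  · have := (eLpNorm_eq_zero_iff hg.1 (by norm_num)).1 h2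
    simp [T, diff_zero this]
  set A := (eLpNorm f 2 volume).toReal with hA
  set B := (eLpNorm g 2 volume).toReal with hB
  have eA : eLpNorm f 2 volume = ENNReal.ofReal A := (ENNReal.ofReal_toReal hf.2.ne).symm
  have eB : eLpNorm g 2 volume = ENNReal.ofReal B := (ENNReal.ofReal_toReal hg.2.ne).symm
  have pA : 0 < A := ENNReal.toReal_pos h1 hf.2.ne
  have pB : 0 < B := ENNReal.toReal_pos h2 hg.2.ne
  set c := Real.sqrt (B / A) with hc
  have pc : 0 < c := Real.sqrt_pos.2 (by positivity)
  have c2 : c ^ 2 = B / A := Real.sq_sqrt (by positivity)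
  have key := main_bound (hf.const_smul c) (hg.const_smul c⁻¹) h
  have eT : ∀ k x, T (c • f) (c⁻¹ • g) Nk k x = T f g Nk k x := by
    intro k x
    unfold T
    simp only [diff_smul]
    refine Finset.sum_congr rfl fun j _ => Finset.sum_congr rfl fun i _ => ?_
    field_simp
  simp only [eT] at key
  refine key.trans ?_
  rw [eLpNorm_const_smul, eLpNorm_const_smul, eA, eB, Real.enorm_of_nonneg pc.le,
    Real.enorm_of_nonneg (inv_pos.2 pc).le]
  have e4 : (4 : ℝ≥0∞) = ENNReal.ofReal 4 := by simp
  have e8 : (8 : ℝ≥0∞) = ENNReal.ofReal 8 := by simp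
  rw [← ENNReal.ofReal_mul (by positivity), ← ENNReal.ofReal_mul (by positivity),
    ← ENNReal.ofReal_pow (by positivity), ← ENNReal.ofReal_pow (by positivity),
    ← ENNReal.ofReal_add (by positivity) (by positivity), e4, e8,
    ← ENNReal.ofReal_mul (by positivity), ← ENNReal.ofReal_mul (by positivity),
    ← ENNReal.ofReal_mul (by positivity)]
  apply ENNReal.ofReal_le_ofReal
  rw [mul_pow, mul_pow, inv_pow, c2]
  apply le_of_eq
  field_simp
  ring

end StopBil

/-- The stopping-time case of the diagonal discrete bilinear estimate
(`r = s = p = q = 2`, `t = 1`). -/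
theorem stopping_time_diagonal_bilinear :
    ∃ C : ℝ≥0, 0 < C ∧
      ∀ (f g : ℝ → ℝ), MemLp f 2 → MemLp g 2 →
      ∀ (Nk : ℕ → ℝ → ℤ), IsStoppingJump Nk →
      (∫⁻ x : ℝ, ∑' k : ℕ, ENNReal.ofReal
          |∑ j ∈ Finset.Ioc (Nk k x) (Nk (k + 1) x),
            ∑ i ∈ Finset.Ioo (Nk k x) j, dyadicDiff i f x * dyadicDiff j g x|)
        ≤ (C : ℝ≥0∞) * eLpNorm f 2 volume * eLpNorm g 2 volume := by
  refine ⟨8, by norm_num, ?_⟩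
  intro f g hf hg Nk h
  exact StopBil.final hf hg h

end
end
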